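/- arXiv:1411.7425 — 3 statements merged into one kernel-verified Lean document; each statement's English description precedes it below -/
import Mathlib

section
/- For every n ≥ 1 and every pair of indices i, j ∈ {1,…,n}, the matrix entry M_{i,j} is a positive-coefficient Laurent polynomial in the central minors of M: there exist a finitely supported function e from the set I = {(x,y) : 1 ≤ x ≤ 2n, 0 ≤ y ≤ n} to ℕ and a multivariate real polynomial p in variables (X_{(x,y)})_{(x,y)∈I} with all coefficients nonnegative, such that for every n×n real matrix M one has M_{i,j} · ∏_{(x,y)∈I} CM_{x,y}(M)^{e(x,y)} = p((CM_{x,y}(M))_{(x,y)∈I}). -/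
/-!
Move the last row of a contiguous minor down to row `i` and call the distance it travels the gap.
A detached minor with gap `0` is a contiguous minor, and a detached minor of size one is an entry of
the matrix. Two determinantal identities, Desnanot–Jacobi and a three-term Plücker relation,
express the product of a detached minor with a contiguous minor as a sum of two such products,
without subtraction. In suitable positions all the contiguous minors involved are central, and an
induction on the gap and then on the size writes every detached minor as a positive Laurent
polynomial in central minors. Since rows and columns are read modulo `n`, every entry can be placed
so that its gap is less than `n`, which keeps the sizes of the central minors at most `n`.

Both identities come from pairing the rows of an array with the generalized cross product of the
rows common to all the minors: the common rows are annihilated, so that only the outer terms of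
Cramer's rule survive.
-/

/-- The contiguous minor `CM_{a,b,y}(M)` of an `n × n` matrix `M` (indexed by `ZMod n`,
i.e. indices are taken modulo `n`): the determinant of the `y × y` matrix whose rows are
`a, a+1, …, a+y-1` in order and whose columns are `b+y-1, …, b+1, b` in order. -/
noncomputable def contiguousMinor (n : ℕ) (M : Matrix (ZMod n) (ZMod n) ℝ)
    (a b : ℤ) (y : ℕ) : ℝ :=
  Matrix.det (Matrix.of fun i j : Fin y =>
    M (((a + (i : ℤ)) : ℤ) : ZMod n) (((b + (y : ℤ) - 1 - (j : ℤ)) : ℤ) : ZMod n))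

/-- The central minor `CM_{x,y}(M)`: the contiguous minor `CM_{a,b,y}(M)` with
`a = ⌊(x-y)/2⌋` and `b = ⌊(x-y+n-((n-1) mod 2))/2⌋`. -/
noncomputable def centralMinor (n : ℕ) (M : Matrix (ZMod n) (ZMod n) ℝ)
    (x : ℤ) (y : ℕ) : ℝ :=
  contiguousMinor n M (Int.fdiv (x - (y : ℤ)) 2)
    (Int.fdiv (x - (y : ℤ) + (n : ℤ) - (((n : ℤ) - 1) % 2)) 2) y

/-- The index set `I = {(x,y) : 1 ≤ x ≤ 2n, 0 ≤ y ≤ n}` of all central minors. -/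
def CentralIdx (n : ℕ) : Set (ℤ × ℕ) :=
  {s | 1 ≤ s.1 ∧ s.1 ≤ 2 * (n : ℤ) ∧ s.2 ≤ n}

open Matrix
open scoped NNReal

section Determinants

variable {R : Type*} [CommRing R] {m : ℕ}

/-- The signed maximal minors of an `m × (m + 1)` matrix: the generalized cross product of its
rows, here with zero-based signs. -/
def maximalMinors (C : Matrix (Fin m) (Fin (m + 1)) R) (j : Fin (m + 1)) : R :=
  (-1) ^ (j : ℕ) * (C.submatrix id j.succAbove).det

theorem det_eq_head_dotProduct_maximalMinors (N : Matrix (Fin (m + 1)) (Fin (m + 1)) R) :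
    N.det = N 0 ⬝ᵥ maximalMinors (N.submatrix Fin.succ id) := by
  rw [det_succ_row_zero]
  exact Finset.sum_congr rfl fun j _ => by
    rw [maximalMinors, submatrix_submatrix]; simp only [Function.comp_id, Function.id_comp]; ring

theorem det_eq_last_dotProduct_maximalMinors (N : Matrix (Fin (m + 1)) (Fin (m + 1)) R) :
    N.det = (-1) ^ m * (N (Fin.last m) ⬝ᵥ maximalMinors (N.submatrix Fin.castSucc id)) := by
  rw [det_succ_row N (Fin.last m), dotProduct, Finset.mul_sum]
  refine Finset.sum_congr rfl fun j _ => ?_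
  rw [maximalMinors, submatrix_submatrix, Fin.succAbove_last, Fin.val_last, pow_add]
  simp only [Function.comp_id, Function.id_comp]
  ring

theorem dotProduct_maximalMinors_self (C : Matrix (Fin m) (Fin (m + 1)) R) (i : Fin m) :
    C i ⬝ᵥ maximalMinors C = 0 := by
  have h := det_eq_head_dotProduct_maximalMinors (of (Fin.cons (C i) C))
  rw [det_zero_of_row_eq (Fin.succ_ne_zero i).symm rfl] at h
  exact h.symm

theorem sum_neg_one_pow_mul_mulVec_mul_det_submatrix_succAbove
    (N : Matrix (Fin (m + 1)) (Fin m) R) (c : Fin m → R) :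
    ∑ i : Fin (m + 1), (-1) ^ (i : ℕ) * (N *ᵥ c) i * (N.submatrix i.succAbove id).det = 0 := by
  have orthogonal : Nᵀ *ᵥ maximalMinors Nᵀ = 0 := funext (dotProduct_maximalMinors_self Nᵀ)
  calc
    _ = (N *ᵥ c) ⬝ᵥ maximalMinors Nᵀ := Finset.sum_congr rfl fun i _ => by
      rw [maximalMinors, ← transpose_submatrix, det_transpose]
      ring
    _ = 0 := by rw [← vecMul_transpose, ← dotProduct_mulVec, orthogonal, dotProduct_zero]

theorem desnanot_jacobi (N : Matrix (Fin (m + 2)) (Fin (m + 2)) R) :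
    (N.submatrix Fin.succ Fin.succ).det * (N.submatrix Fin.castSucc Fin.castSucc).det =
      N.det * (N.submatrix (Fin.succ ∘ Fin.castSucc) (Fin.succ ∘ Fin.castSucc)).det +
      (N.submatrix Fin.succ Fin.castSucc).det * (N.submatrix Fin.castSucc Fin.succ).det := by
  let C := N.submatrix (Fin.succ ∘ Fin.castSucc) Fin.succ
  let c : Fin (m + 2) → R := Fin.cons 0 (maximalMinors C)
  have mulVec_c (i) : (N *ᵥ c) i = N.submatrix id Fin.succ i ⬝ᵥ maximalMinors C := by
    simp [mulVec, dotProduct, Fin.sum_univ_succ, c]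
  have first : (N *ᵥ c) 0 = (N.submatrix Fin.castSucc Fin.succ).det := by
    rw [mulVec_c, det_eq_head_dotProduct_maximalMinors]; rfl
  have interior (k : Fin m) : (N *ᵥ c) k.castSucc.succ = 0 := by
    rw [mulVec_c]; exact dotProduct_maximalMinors_self C k
  have last : (N.submatrix Fin.succ Fin.succ).det = (-1) ^ m * (N *ᵥ c) (Fin.last (m + 1)) := by
    rw [mulVec_c, det_eq_last_dotProduct_maximalMinors]; rfl
  have c_last : c (Fin.last (m + 1)) = (-1) ^ m *
      (N.submatrix (Fin.succ ∘ Fin.castSucc) (Fin.succ ∘ Fin.castSucc)).det := by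
    change maximalMinors C (Fin.last m) = _
    rw [maximalMinors, Fin.succAbove_last, Fin.val_last]
    rfl
  have cramer : (N.adjugate *ᵥ (N *ᵥ c)) (Fin.last _) = N.det * c (Fin.last _) := by
    simp [mulVec_mulVec, adjugate_mul, smul_mulVec]
  rw [mulVec, dotProduct, Fin.sum_univ_succ, Fin.sum_univ_castSucc] at cramer
  simp only [adjugate_fin_succ_eq_det_submatrix, interior, first, c_last, Fin.succ_last,
    Fin.succAbove_zero, Fin.succAbove_last, Fin.val_last, Fin.val_zero, mul_zero,
    Nat.succ_eq_add_one, pow_add, pow_one, Finset.sum_const_zero, zero_add] at cramer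
  rw [last]
  obtain sign | sign := neg_one_pow_eq_or R m <;> rw [sign] at cramer ⊢
  · linear_combination cramer
  · linear_combination -cramer

theorem plucker_three_term (N : Matrix (Fin (m + 3)) (Fin (m + 2)) R) :
    (N.submatrix (Fin.last (m + 1)).castSucc.succAbove id).det *
        (N.submatrix (Fin.succ ∘ Fin.castSucc) Fin.castSucc).det =
      (N.submatrix Fin.succ id).det *
        (N.submatrix (Fin.castSucc ∘ Fin.castSucc) Fin.castSucc).det +
      (N.submatrix ((Fin.last (m + 1)).castSucc.succAbove ∘ Fin.succ) Fin.castSucc).det *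
        (N.submatrix Fin.castSucc id).det := by
  let C := N.submatrix (Fin.succ ∘ Fin.castSucc ∘ Fin.castSucc) Fin.castSucc
  let c : Fin (m + 2) → R := Fin.snoc (maximalMinors C) 0
  have mulVec_c (i) : (N *ᵥ c) i = N.submatrix id Fin.castSucc i ⬝ᵥ maximalMinors C := by
    simp [mulVec, dotProduct, Fin.sum_univ_castSucc, c]
  have first : (N *ᵥ c) 0 =
      (N.submatrix (Fin.castSucc ∘ Fin.castSucc) Fin.castSucc).det := by
    rw [mulVec_c, det_eq_head_dotProduct_maximalMinors]; rfl
  have interior (k : Fin m) : (N *ᵥ c) k.castSucc.castSucc.succ = 0 := by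
    rw [mulVec_c]; exact dotProduct_maximalMinors_self C k
  have penultimate : (N.submatrix (Fin.succ ∘ Fin.castSucc) Fin.castSucc).det =
      (-1) ^ m * (N *ᵥ c) (Fin.last (m + 1)).castSucc := by
    rw [mulVec_c, det_eq_last_dotProduct_maximalMinors]; rfl
  have last : (N.submatrix ((Fin.last (m + 1)).castSucc.succAbove ∘ Fin.succ) Fin.castSucc).det =
      (-1) ^ m * (N *ᵥ c) (Fin.last (m + 2)) := by
    rw [mulVec_c, det_eq_last_dotProduct_maximalMinors, submatrix_submatrix]
    have rows : (Fin.last (m + 1)).castSucc.succAbove ∘ Fin.succ ∘ Fin.castSucc =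
        Fin.succ ∘ Fin.castSucc ∘ Fin.castSucc :=
      funext fun k => Fin.succAbove_castSucc_of_lt _ _ (Fin.castSucc_lt_last k.succ)
    rw [Function.comp_assoc, rows]
    have last_row : N.submatrix ((Fin.last (m + 1)).castSucc.succAbove ∘ Fin.succ) Fin.castSucc
        (Fin.last m) = N.submatrix id Fin.castSucc (Fin.last (m + 2)) := by
      ext j; simp
    rw [last_row]
    rfl
  have relation := sum_neg_one_pow_mul_mulVec_mul_det_submatrix_succAbove N c
  rw [Fin.sum_univ_succ, Fin.sum_univ_castSucc, Fin.sum_univ_castSucc] at relation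
  simp only [interior, first, Fin.succ_castSucc (Fin.last m), Fin.succ_last, Fin.succAbove_zero,
    Fin.succAbove_last, Fin.val_succ, Fin.val_castSucc, Fin.val_last, Fin.val_zero,
    Nat.succ_eq_add_one, pow_succ, pow_zero, mul_zero, zero_mul, one_mul, mul_neg, mul_one,
    neg_neg, Finset.sum_const_zero, zero_add] at relation
  rw [last, penultimate]
  linear_combination -relation

end Determinants

section WindowMinors

variable {R : Type*} {m : ℕ}

theorem snoc_comp_succ {α : Type*} (f : Fin (m + 1) → α) (x : α) :
    (Fin.snoc f x : Fin (m + 2) → α) ∘ Fin.succ = Fin.snoc (f ∘ Fin.succ) x := by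
  ext k
  cases k using Fin.lastCases with
  | last => simp
  | cast k => simp [Fin.succ_castSucc, -Fin.castSucc_succ]

theorem snoc_comp_castSucc_last_succAbove {α : Type*} (f : Fin (m + 1) → α) (x : α) :
    (Fin.snoc f x : Fin (m + 2) → α) ∘ (Fin.last m).castSucc.succAbove =
      Fin.snoc (f ∘ Fin.castSucc) x := by
  ext k
  cases k using Fin.lastCases with
  | last => simp
  | cast k => simp

/-- The integers `a, a + 1, …, a + m - 1`, used as the row or column indices of a minor. -/
def consecutive (a : ℤ) (k : Fin m) : ℤ := a + k

theorem consecutive_comp_castSucc (a : ℤ) :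
    (consecutive a : Fin (m + 1) → ℤ) ∘ Fin.castSucc = consecutive a := rfl

theorem consecutive_comp_succ (a : ℤ) :
    (consecutive a : Fin (m + 1) → ℤ) ∘ Fin.succ = consecutive (a + 1) := by
  ext k
  simp only [consecutive, Function.comp_apply, Fin.val_succ]
  push_cast
  ring

theorem snoc_consecutive (a : ℤ) :
    (Fin.snoc (consecutive a : Fin m → ℤ) (a + m) : Fin (m + 1) → ℤ) = consecutive a := by
  ext k
  cases k using Fin.lastCases <;> simp [consecutive]

variable [CommRing R]

/-- The minor of an infinite array on the rows `r, …, r + y - 1` and columns `s, …, s + y - 1`. -/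
def windowMinor (A : Matrix ℤ ℤ R) (r s : ℤ) (y : ℕ) : R :=
  (A.submatrix (consecutive r : Fin y → ℤ) (consecutive s)).det

/-- The minor of an infinite array on the rows `r, …, r + y - 1, i` and columns `s, …, s + y`: a
window minor whose last row has been moved to row `i`. -/
def detachedMinor (A : Matrix ℤ ℤ R) (r s : ℤ) (y : ℕ) (i : ℤ) : R :=
  (A.submatrix (Fin.snoc (consecutive r : Fin y → ℤ) i : Fin (y + 1) → ℤ) (consecutive s)).det

theorem detachedMinor_zero (A : Matrix ℤ ℤ R) (r s i : ℤ) : detachedMinor A r s 0 i = A i s := by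
  simp [detachedMinor, consecutive, Fin.snoc]

theorem detachedMinor_add (A : Matrix ℤ ℤ R) (r s : ℤ) (y : ℕ) :
    detachedMinor A r s y (r + y) = windowMinor A r s (y + 1) := by
  rw [detachedMinor, snoc_consecutive, windowMinor]

theorem detachedMinor_desnanot_jacobi (A : Matrix ℤ ℤ R) (r s : ℤ) (y : ℕ) (i : ℤ) :
    detachedMinor A (r + 1) (s + 1) y i * windowMinor A r s (y + 1) =
      detachedMinor A r s (y + 1) i * windowMinor A (r + 1) (s + 1) y +
      detachedMinor A (r + 1) s y i * windowMinor A r (s + 1) (y + 1) := by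
  have h := desnanot_jacobi
    (A.submatrix (Fin.snoc (consecutive r : Fin (y + 1) → ℤ) i) (consecutive s))
  simpa only [detachedMinor, windowMinor, submatrix_submatrix, ← Function.comp_assoc,
    snoc_comp_succ, Fin.snoc_comp_castSucc, consecutive_comp_succ, consecutive_comp_castSucc]
    using h

theorem detachedMinor_plucker (A : Matrix ℤ ℤ R) (r s : ℤ) (y : ℕ) (i : ℤ) :
    detachedMinor A r s (y + 1) i * windowMinor A (r + 1) s (y + 1) =
      detachedMinor A (r + 1) s (y + 1) i * windowMinor A r s (y + 1) +
      detachedMinor A (r + 1) s y i * windowMinor A r s (y + 2) := by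
  have h := plucker_three_term
    (A.submatrix (Fin.snoc (consecutive r : Fin (y + 2) → ℤ) i) (consecutive s))
  simpa only [detachedMinor, windowMinor, submatrix_submatrix, ← Function.comp_assoc,
    snoc_comp_succ, Fin.snoc_comp_castSucc, snoc_comp_castSucc_last_succAbove,
    consecutive_comp_succ, consecutive_comp_castSucc, Function.comp_id] using h

end WindowMinors

section Laurent

variable {P K : Type*} [CommSemiring P] [CommSemiring K] [Algebra P K] {S : Set K}

variable (P) in
/-- `f` is a Laurent polynomial in the elements of `S` with coefficients in the semiring `P`, with
the denominator cleared so that no element of `S` needs to be invertible. Taking `P = ℝ≥0` encodes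
positivity of the coefficients. -/
def IsLaurentIn (S : Set K) (f : K) : Prop :=
  ∃ d ∈ Submonoid.closure S, f * d ∈ Algebra.adjoin P S

theorem IsLaurentIn.of_mem {f : K} (hf : f ∈ S) : IsLaurentIn P S f :=
  ⟨1, one_mem _, by simpa using Algebra.subset_adjoin hf⟩

theorem IsLaurentIn.mono {T : Set K} {f : K} (hST : S ⊆ T) (hf : IsLaurentIn P S f) :
    IsLaurentIn P T f :=
  let ⟨d, hd, hfd⟩ := hf
  ⟨d, Submonoid.closure_mono hST hd, Algebra.adjoin_mono hST hfd⟩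

theorem closure_le_adjoin : Submonoid.closure S ≤ (Algebra.adjoin P S).toSubmonoid :=
  Submonoid.closure_le.2 Algebra.subset_adjoin

theorem IsLaurentIn.mul {f g : K} (hf : IsLaurentIn P S f) (hg : IsLaurentIn P S g) :
    IsLaurentIn P S (f * g) := by
  obtain ⟨d, hd, hfd⟩ := hf
  obtain ⟨e, he, hge⟩ := hg
  exact ⟨d * e, mul_mem hd he, by rw [mul_mul_mul_comm]; exact mul_mem hfd hge⟩

theorem IsLaurentIn.add {f g : K} (hf : IsLaurentIn P S f) (hg : IsLaurentIn P S g) :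
    IsLaurentIn P S (f + g) := by
  obtain ⟨d, hd, hfd⟩ := hf
  obtain ⟨e, he, hge⟩ := hg
  have clear : (f + g) * (d * e) = f * d * e + g * e * d := by ring
  refine ⟨d * e, mul_mem hd he, ?_⟩
  rw [clear]
  exact add_mem (mul_mem hfd (closure_le_adjoin he)) (mul_mem hge (closure_le_adjoin hd))

theorem IsLaurentIn.of_mul_right {f c : K} (hc : c ∈ S) (hfc : IsLaurentIn P S (f * c)) :
    IsLaurentIn P S f := by
  obtain ⟨d, hd, hfd⟩ := hfc
  exact ⟨c * d, mul_mem (Submonoid.subset_closure hc) hd, by rwa [← mul_assoc]⟩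

theorem IsLaurentIn.of_mul_eq_add {f c f₁ a f₂ b : K} (hf₁ : IsLaurentIn P S f₁)
    (hf₂ : IsLaurentIn P S f₂) (hc : c ∈ S) (ha : a ∈ S) (hb : b ∈ S)
    (h : f * c = f₁ * a + f₂ * b) : IsLaurentIn P S f :=
  .of_mul_right hc <| h ▸ (hf₁.mul (.of_mem ha)).add (hf₂.mul (.of_mem hb))

theorem IsLaurentIn.exists_eval_eq {σ X : Type*} {φ : σ → X → ℝ} {f : X → ℝ}
    (hf : IsLaurentIn ℝ≥0 (Set.range φ) f) :
    ∃ (e : σ →₀ ℕ) (p : MvPolynomial σ ℝ), (∀ m : σ →₀ ℕ, 0 ≤ MvPolynomial.coeff m p) ∧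
      ∀ x, f x * e.prod (fun s k => φ s x ^ k) = MvPolynomial.eval (fun s => φ s x) p := by
  obtain ⟨d, hd, hfd⟩ := hf
  obtain ⟨e, rfl⟩ := Submonoid.exists_finsupp_of_mem_closure_range φ d hd
  rw [Algebra.adjoin_range_eq_range_aeval] at hfd
  obtain ⟨p, hp⟩ := hfd
  refine ⟨e, p.map NNReal.toRealHom, fun m => ?_, fun x => ?_⟩
  · rw [MvPolynomial.coeff_map]
    exact NNReal.coe_nonneg _
  · calc
      _ = (f * e.prod (φ · ^ ·)) x := by simp [Finsupp.prod]
      _ = Pi.evalAlgHom ℝ≥0 (fun _ : X => ℝ) x (MvPolynomial.aeval φ p) := (congrFun hp x).symm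
      _ = MvPolynomial.aeval (fun s => φ s x) p := MvPolynomial.comp_aeval_apply _ _ _
      _ = _ := (MvPolynomial.eval_map _ _ _).symm

end Laurent

section CentralWindows

variable {P K : Type*} [CommSemiring P] [CommRing K] [Algebra P K] {A : Matrix ℤ ℤ K}
  {h r s i : ℤ} {n y : ℕ}

/-- The window minors of size at most `n` that straddle the antidiagonal `h`: the sum `r + s + y`
locates the centre of the window, and the central minors are those where it is `h` or `h + 1`. -/
def centralWindowMinors (A : Matrix ℤ ℤ K) (h : ℤ) (n : ℕ) : Set K :=
  {x | ∃ (r s : ℤ) (y : ℕ), y ≤ n ∧ (r + s + y = h ∨ r + s + y = h + 1) ∧ windowMinor A r s y = x}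

theorem windowMinor_mem_centralWindowMinors (hy : y ≤ n)
    (hrs : r + s + y = h ∨ r + s + y = h + 1) : windowMinor A r s y ∈ centralWindowMinors A h n :=
  ⟨r, s, y, hy, hrs, rfl⟩

theorem isLaurentIn_detachedMinor_succ_succ (hy : y + 1 ≤ n) (hrs : r + s + y + 1 = h)
    (hlong : IsLaurentIn P (centralWindowMinors A h n) (detachedMinor A r s (y + 1) i))
    (hshort : IsLaurentIn P (centralWindowMinors A h n) (detachedMinor A (r + 1) s y i)) :
    IsLaurentIn P (centralWindowMinors A h n) (detachedMinor A (r + 1) (s + 1) y i) :=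
  hlong.of_mul_eq_add hshort
    (windowMinor_mem_centralWindowMinors hy (by grind))
    (windowMinor_mem_centralWindowMinors (by grind) (by grind))
    (windowMinor_mem_centralWindowMinors hy (by grind))
    (detachedMinor_desnanot_jacobi A r s y i)

theorem isLaurentIn_detachedMinor_of_succ (hy : y + 2 ≤ n) (hrs : r + s + y + 1 = h)
    (hlong : IsLaurentIn P (centralWindowMinors A h n) (detachedMinor A (r + 1) s (y + 1) i))
    (hshort : IsLaurentIn P (centralWindowMinors A h n) (detachedMinor A (r + 1) s y i)) :
    IsLaurentIn P (centralWindowMinors A h n) (detachedMinor A r s (y + 1) i) :=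
  hlong.of_mul_eq_add hshort
    (windowMinor_mem_centralWindowMinors (by grind) (by grind))
    (windowMinor_mem_centralWindowMinors (by grind) (by grind))
    (windowMinor_mem_centralWindowMinors hy (by grind))
    (detachedMinor_plucker A r s y i)

theorem isLaurentIn_detachedMinor {g : ℕ} (hg : y + g + 1 ≤ n) (hrs : r + s + y = h)
    (hi : i = r + y + g) :
    IsLaurentIn P (centralWindowMinors A h n) (detachedMinor A r s y i) := by
  induction g generalizing y r s i with
  | zero =>
    obtain rfl : i = r + y := by simpa using hi
    rw [detachedMinor_add]
    exact .of_mem (windowMinor_mem_centralWindowMinors hg (by grind))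
  | succ g ih =>
    have upper {r s i : ℤ} {y : ℕ} (hy : y + g + 2 ≤ n) (hrs : r + s + y + 1 = h)
        (hi : i = r + 1 + y + g) :
        IsLaurentIn P (centralWindowMinors A h n) (detachedMinor A (r + 1) (s + 1) y i) :=
      isLaurentIn_detachedMinor_succ_succ (by grind) hrs
        (ih (by grind) (by grind) (by grind)) (ih (by grind) (by grind) (by grind))
    induction y generalizing r s i with
    | zero =>
      have h₀ := upper (r := r) (s := s - 1) (y := 0) (i := i) (by grind) (by grind) (by grind)
      rw [detachedMinor_zero] at h₀ ⊢
      rwa [sub_add_cancel] at h₀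
    | succ y ihy =>
      have hlong := upper (r := r) (s := s - 1) (y := y + 1) (i := i)
        (by grind) (by grind) (by grind)
      rw [sub_add_cancel] at hlong
      exact isLaurentIn_detachedMinor_of_succ (by grind) (by grind) hlong
        (ihy (by grind) (by grind) (by grind))

theorem isLaurentIn_entry (hle : h ≤ i + s) (hlt : i + s < h + n) :
    IsLaurentIn P (centralWindowMinors A h n) (A i s) := by
  obtain ⟨g, hg⟩ := Int.le.dest hle
  rw [← detachedMinor_zero A (h - s)]
  exact isLaurentIn_detachedMinor (g := g) (by grind) (by grind) (by grind)

end CentralWindows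

section Periodic

variable {n : ℕ}

/-- The entries of an `n × n` matrix as coordinate functions on the space of matrices, spread out
into a doubly periodic array. The sign reverses the columns, so that column indices increase as
in `windowMinor` whereas they decrease in `contiguousMinor`. -/
def periodicArray (n : ℕ) : Matrix ℤ ℤ (Matrix (ZMod n) (ZMod n) ℝ → ℝ) :=
  of fun i s M => M i (-s : ℤ)

theorem windowMinor_periodicArray (r s : ℤ) (y : ℕ) (M : Matrix (ZMod n) (ZMod n) ℝ) :
    windowMinor (periodicArray n) r s y M = contiguousMinor n M r (1 - s - y) y := by
  calc
    _ = Pi.evalRingHom (fun _ => ℝ) M (windowMinor (periodicArray n) r s y) := rfl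
    _ = _ := by
      rw [windowMinor, RingHom.map_det, contiguousMinor]
      congr 1
      ext k l
      have column : 1 - s - y + y - 1 - (l : ℤ) = -(s + l) := by ring
      rw [of_apply, column]
      rfl

theorem contiguousMinor_add_mul (M : Matrix (ZMod n) (ZMod n) ℝ) (a b k : ℤ) (y : ℕ) :
    contiguousMinor n M (a + n * k) (b + n * k) y = contiguousMinor n M a b y := by
  simp [contiguousMinor]

theorem centralMinor_add_mul (M : Matrix (ZMod n) (ZMod n) ℝ) (x k : ℤ) (y : ℕ) :
    centralMinor n M (x + 2 * n * k) y = centralMinor n M x y := by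
  rw [centralMinor, centralMinor]
  refine Eq.trans ?_ (contiguousMinor_add_mul M _ _ k y)
  simp only [Int.fdiv_eq_ediv_of_nonneg _ zero_le_two, mul_assoc]
  congr 1 <;> omega

-- The two floors in `centralMinor` differ by `(n - 1) / 2` or by one more, depending on the parity
-- of `x - y`: this is where the two admissible values of `r + s + y` come from.
theorem centralMinor_eq_contiguousMinor (M : Matrix (ZMod n) (ZMod n) ℝ) {r s : ℤ} {y : ℕ}
    (hrs : r + s + y = -((n - 1) / 2) ∨ r + s + y = -((n - 1) / 2) + 1) :
    centralMinor n M (r - s + 1 - (n - 1) / 2) y = contiguousMinor n M r (1 - s - y) y := by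
  rw [centralMinor]
  simp only [Int.fdiv_eq_ediv_of_nonneg _ zero_le_two]
  congr 1 <;> omega

theorem centralWindowMinors_periodicArray_subset [NeZero n] :
    centralWindowMinors (periodicArray n) (-((n - 1) / 2)) n ⊆
      Set.range fun (c : CentralIdx n) M => centralMinor n M c.1.1 c.1.2 := by
  rintro _ ⟨r, s, y, hy, hrs, rfl⟩
  have hn : (0 : ℤ) < 2 * n := by have := NeZero.pos n; omega
  let x : ℤ := r - s + 1 - (n - 1) / 2
  have hx₀ := Int.emod_nonneg (x - 1) hn.ne'
  have hx₁ := Int.emod_lt_of_pos (x - 1) hn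
  refine ⟨⟨((x - 1) % (2 * n) + 1, y), by grind, by grind, hy⟩, funext fun M => ?_⟩
  calc
    centralMinor n M ((x - 1) % (2 * n) + 1) y = centralMinor n M x y := by
      rw [← centralMinor_add_mul M _ ((x - 1) / (2 * n))]
      congr 1
      linarith [Int.emod_add_mul_ediv (x - 1) (2 * n)]
    _ = windowMinor (periodicArray n) r s y M := by
      rw [centralMinor_eq_contiguousMinor M hrs, windowMinor_periodicArray]

theorem exists_intCast_eq_and_mem_Ico [NeZero n] (i : ZMod n) (a : ℤ) :
    ∃ k : ℤ, (k : ZMod n) = i ∧ k ∈ Set.Ico a (a + n) := by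
  obtain ⟨k, rfl⟩ := ZMod.intCast_surjective i
  have hn : (0 : ℤ) < n := mod_cast NeZero.pos n
  refine ⟨toIcoMod hn a k, ?_, toIcoMod_mem_Ico hn a k⟩
  simp [toIcoMod]

end Periodic

/-- Every matrix entry `M i j` of an `n × n` matrix is a positive-coefficient Laurent
polynomial in the central minors of `M`: there are a finitely supported exponent function `e`
on the central-minor index set and a polynomial `p` with nonnegative coefficients such that,
for every `M`, `M i j · ∏ CM_{x,y}(M)^{e(x,y)} = p((CM_{x,y}(M))_{(x,y)})`. -/
theorem entry_laurent_in_central_minors (n : ℕ) [NeZero n] (i j : ZMod n) :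
    ∃ (e : (CentralIdx n) →₀ ℕ) (p : MvPolynomial (CentralIdx n) ℝ),
      (∀ m : (CentralIdx n) →₀ ℕ, 0 ≤ MvPolynomial.coeff m p) ∧
      ∀ M : Matrix (ZMod n) (ZMod n) ℝ,
        M i j * e.prod (fun s k => (centralMinor n M s.1.1 s.1.2) ^ k) =
          MvPolynomial.eval (fun s : CentralIdx n => centralMinor n M s.1.1 s.1.2) p := by
  obtain ⟨s, hs⟩ := ZMod.intCast_surjective (-j)
  obtain ⟨k, rfl, hk⟩ := exists_intCast_eq_and_mem_Ico i (-((n - 1) / 2) - s)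
  have entry : periodicArray n k s = fun M => M k j := by simp [periodicArray, hs]
  have laurent : IsLaurentIn ℝ≥0 _ (periodicArray n k s) :=
    isLaurentIn_entry (h := -((n - 1) / 2)) (n := n) (by grind) (by grind)
  rw [entry] at laurent
  exact (laurent.mono centralWindowMinors_periodicArray_subset).exists_eval_eq
end

section
/- Fix n ≥ 1 and a noninterlaced pair of k-element subsets A = {a_1,…,a_k} and B = {b_1,…,b_k} of {1,…,n}, listed so that a_1, a_2, …, a_k, b_k, b_{k−1}, …, b_1 occur in circular order. Then the noninterlaced minor det((M_{a_i,b_j})_{1≤i,j≤k}) is a positive rational function of the small central minors of M: there exist multivariate real polynomials p and q in variables indexed by the small-central-minor index set S = {(x,y) : 1 ≤ x ≤ 2n, and either 1 ≤ y < n/2, or y = n/2 and x+y is odd}, both with all coefficients nonnegative and with q not identically zero, such that for every n×n real matrix M one has det((M_{a_i,b_j})_{i,j}) · q((CM_s(M))_{s∈S}) = p((CM_s(M))_{s∈S}). -/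
/-- The index set of the small central minors: pairs `(x,y)` with `1 ≤ x ≤ 2n` and
either `1 ≤ y < n/2`, or `y = n/2` and `x + y` odd. -/
def SmallIdx (n : ℕ) : Set (ℤ × ℕ) :=
  {s | 1 ≤ s.1 ∧ s.1 ≤ 2 * (n : ℤ) ∧
    ((1 ≤ s.2 ∧ 2 * s.2 < n) ∨ (2 * s.2 = n ∧ Odd (s.1 + (s.2 : ℤ))))}

/-!
The contiguous minors obey the octahedron recurrence (Dodgson condensation). For offsets
`d = b - a` near `n / 2` the noninterlaced contiguous minors `CM_{a,b,y}` are, up to the period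
`2n` in `x`, small central minors. Solving the recurrence for its only minor of offset `d + 1`
(or `d - 1`) involves no subtraction, so all noninterlaced contiguous minors are positive rational
functions of the small central minors.

Cutting the circle between the two arcs turns a noninterlaced minor into an arbitrary minor of a
matrix all of whose contiguous minors are noninterlaced contiguous minors. A three-term Plücker
relation, applied to the leftmost and rightmost columns and a gap between them, writes such a minor
as a subtraction-free expression in minors with smaller column spread. This makes the columns
contiguous, and by transposition also the rows.
-/

open Matrix
open scoped NNReal

section DeterminantIdentities

variable {R : Type*} [CommRing R]

section Plucker

variable {ι : Type*} [Fintype ι] [DecidableEq ι] (A : Matrix ι ι R) {p q : ι}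

theorem det_updateCol_updateCol_swap (hpq : p ≠ q) (v w : ι → R) :
    ((A.updateCol p v).updateCol q w).det = -((A.updateCol p w).updateCol q v).det := by
  have hswap : ((A.updateCol p w).updateCol q v).submatrix id (Equiv.swap p q)
      = (A.updateCol p v).updateCol q w := by
    ext i j
    rcases eq_or_ne j p with rfl | hjp
    · simp [hpq]
    rcases eq_or_ne j q with rfl | hjq
    · simp [hpq]
    · simp [Equiv.swap_apply_of_ne_of_ne hjp hjq, hjp, hjq]
  rw [← hswap, det_permute', Equiv.Perm.sign_swap hpq]
  simp

theorem det_mul_det_updateCol_updateCol (hpq : p ≠ q) (y z : ι → R) :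
    A.det * ((A.updateCol p y).updateCol q z).det
      = (A.updateCol p y).det * (A.updateCol q z).det
        + (A.updateCol q y).det * ((A.updateCol p (A.col q)).updateCol q z).det := by
  -- Apply the linear functional `v ↦ det (A with v at p and z at q)` to Cramer's identity
  -- `∑ j, det (A with y at j) • A.col j = det A • y`; only the terms `j = p` and `j = q` survive.
  have cramer_eq (v : ι → R) :
      (A.updateCol q z).cramer v p = ((A.updateCol p v).updateCol q z).det := by
    rw [cramer_apply, updateCol_comm _ hpq]
  have cramer_identity : ∑ j, A.cramer y j • A.col j = A.det • y := by
    rw [← mulVec_cramer, mulVec_eq_sum]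
    simp [Matrix.col_def]
  have sum_eq : ∑ j, A.cramer y j * ((A.updateCol p (A.col j)).updateCol q z).det
      = A.det * ((A.updateCol p y).updateCol q z).det := by
    simp only [← cramer_eq]
    simpa using congrArg (fun v => (A.updateCol q z).cramer v p) cramer_identity
  have vanish : ∀ j ∈ Finset.univ, j ∉ ({p, q} : Finset ι) →
      A.cramer y j * ((A.updateCol p (A.col j)).updateCol q z).det = 0 := by
    intro j _ hj
    simp only [Finset.mem_insert, Finset.mem_singleton, not_or] at hj
    rw [det_zero_of_column_eq (i := p) (j := j) (Ne.symm hj.1), mul_zero]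
    simp [hj.1, hj.2, hpq]
  rw [← sum_eq, ← Finset.sum_subset (Finset.subset_univ {p, q}) vanish, Finset.sum_pair hpq,
    cramer_apply, cramer_apply]
  congr 4
  exact updateCol_eq_self A p

theorem plucker_three_term_s4 (hpq : p ≠ q) (w x y z : ι → R) :
    ((A.updateCol p w).updateCol q y).det * ((A.updateCol p x).updateCol q z).det
      = ((A.updateCol p w).updateCol q x).det * ((A.updateCol p y).updateCol q z).det
        + ((A.updateCol p x).updateCol q y).det * ((A.updateCol p w).updateCol q z).det := by
  have h := det_mul_det_updateCol_updateCol ((A.updateCol p w).updateCol q x) hpq y z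
  have hcol : ((A.updateCol p w).updateCol q x).col q = x := by ext i; simp
  have hp (v : ι → R) : ((A.updateCol p w).updateCol q x).updateCol p v
      = (A.updateCol p v).updateCol q x := by
    rw [← updateCol_comm _ hpq, updateCol_idem]
  simp only [hcol, hp, updateCol_idem] at h
  rw [det_updateCol_updateCol_swap A hpq y x] at h
  linear_combination -h

end Plucker

theorem det_updateCol_single {m : ℕ} (A : Matrix (Fin (m + 1)) (Fin (m + 1)) R)
    (i j : Fin (m + 1)) :
    (A.updateCol j (Pi.single i 1)).det
      = (-1) ^ ((i : ℕ) + (j : ℕ)) * (A.submatrix i.succAbove j.succAbove).det := by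
  rw [← adjugate_fin_succ_eq_det_submatrix, ← transpose_apply (adjugate A) i j, adjugate_transpose,
    adjugate_apply, updateRow_transpose, det_transpose]

theorem dodgson_condensation {m : ℕ} (A : Matrix (Fin (m + 2)) (Fin (m + 2)) R) :
    A.det * (A.submatrix (fun i : Fin m => i.castSucc.succ) (fun i : Fin m => i.castSucc.succ)).det
      = (A.submatrix Fin.succ Fin.succ).det * (A.submatrix Fin.castSucc Fin.castSucc).det
        - (A.submatrix Fin.succ Fin.castSucc).det * (A.submatrix Fin.castSucc Fin.succ).det := by
  have hne : (0 : Fin (m + 2)) ≠ Fin.last (m + 1) := (Fin.last_pos).ne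
  have hlast (u : Fin (m + 2) → R) :
      (A.updateCol 0 u).updateCol (Fin.last (m + 1)) (A.col (Fin.last (m + 1)))
        = A.updateCol 0 u := by
    rw [updateCol_comm _ hne]
    exact congrArg (updateCol · 0 u) (updateCol_eq_self A _)
  have hfirst : A.updateCol 0 (A.col 0) = A := updateCol_eq_self A 0
  have interior : ((A.updateCol 0 (Pi.single 0 1)).updateCol (Fin.last (m + 1))
      (Pi.single (Fin.last (m + 1)) 1)).det
        = (A.submatrix (fun i : Fin m => i.castSucc.succ)
            (fun i : Fin m => i.castSucc.succ)).det := by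
    have hcol : (A.updateCol 0 (Pi.single 0 1)).submatrix Fin.castSucc Fin.castSucc
        = (A.submatrix Fin.castSucc Fin.castSucc).updateCol 0 (Pi.single 0 1) := by
      ext i j
      simp [updateCol_apply, Pi.single_apply]
    rw [det_updateCol_single, Fin.succAbove_last, hcol, det_updateCol_single]
    simp [submatrix_submatrix, Function.comp_def]
  have h := plucker_three_term_s4 A hne (A.col 0) (Pi.single 0 1) (A.col (Fin.last (m + 1)))
    (Pi.single (Fin.last (m + 1)) 1)
  rw [det_updateCol_updateCol_swap A hne (A.col (Fin.last (m + 1))), hlast, hlast, hlast, hfirst,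
    interior] at h
  simp only [det_updateCol_single, Fin.succAbove_last, Fin.succAbove_zero, Fin.val_last,
    Fin.val_zero, add_zero, zero_add, pow_zero, one_mul, ← two_mul, pow_mul,
    even_two.neg_one_pow, one_pow] at h
  have sign_sq : (-1 : R) ^ (m + 1) * (-1) ^ (m + 1) = 1 := by rw [← mul_pow]; simp
  linear_combination h - (A.submatrix Fin.succ Fin.castSucc).det
    * (A.submatrix Fin.castSucc Fin.succ).det * sign_sq

theorem karlin_identity {κ : Type*} {m : ℕ} (A : Matrix (Fin (m + 2)) κ R) (r : Fin (m + 2))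
    (K : Fin m → κ) (w x y : κ) :
    (A.submatrix id (vecCons w (vecCons y K))).det * (A.submatrix r.succAbove (vecCons x K)).det
      = (A.submatrix id (vecCons w (vecCons x K))).det
          * (A.submatrix r.succAbove (vecCons y K)).det
        + (A.submatrix id (vecCons x (vecCons y K))).det
          * (A.submatrix r.succAbove (vecCons w K)).det := by
  set B := A.submatrix id (vecCons w (vecCons w K))
  have full_minor (u v : κ) : (B.updateCol 0 (A.col u)).updateCol 1 (A.col v)
      = A.submatrix id (vecCons u (vecCons v K)) := by
    ext i j
    refine Fin.cases ?_ (fun j => Fin.cases ?_ (fun j => ?_) j) j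
    · simp
    · simp
    · simp [B, Fin.ext_iff]
  have deleted_minor (u : κ) : ((B.updateCol 0 (A.col u)).updateCol 1 (Pi.single r 1)).det
      = (-1) ^ ((r : ℕ) + 1) * (A.submatrix r.succAbove (vecCons u K)).det := by
    rw [det_updateCol_single, Fin.val_one]
    congr 2
    ext i j
    refine Fin.cases ?_ (fun j => ?_) j
    · simp
    · have hj : (1 : Fin (m + 2)).succAbove j.succ = j.succ.succ := by
        rw [← Fin.succ_zero_eq_one, Fin.succ_succAbove_succ, Fin.succAbove_zero]
      simp [B, hj]
  have h := plucker_three_term_s4 B Fin.zero_ne_one (A.col w) (A.col x) (A.col y) (Pi.single r 1)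
  simp only [full_minor, deleted_minor] at h
  apply (isUnit_one.neg.pow ((r : ℕ) + 1)).mul_left_cancel
  linear_combination h

end DeterminantIdentities

section PositiveRational

theorem mvPolynomial_add_ne_zero {R τ : Type*} [CommSemiring R] [Subsingleton (AddUnits R)]
    {p q : MvPolynomial τ R} (hp : p ≠ 0) : p + q ≠ 0 := by
  contrapose! hp
  ext m
  have hm : p.coeff m + q.coeff m = 0 := by
    rw [← MvPolynomial.coeff_add, hp, MvPolynomial.coeff_zero]
  exact (add_eq_zero.mp hm).1

variable {Ω σ : Type*} (v : Ω → σ → ℝ)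

/-- `F` is a positive rational function of the functions `v · s`, `s : σ`. Using coefficients in
`ℝ≥0` encodes nonnegativity of the coefficients; the quotient `p / q` is cleared of its denominator,
which may vanish at some `ω`. The condition `p ≠ 0` makes the class closed under division. -/
def IsPositiveRational (F : Ω → ℝ) : Prop :=
  ∃ p q : MvPolynomial σ ℝ≥0, p ≠ 0 ∧ q ≠ 0 ∧
    ∀ ω, F ω * MvPolynomial.aeval (v ω) q = MvPolynomial.aeval (v ω) p

namespace IsPositiveRational

variable {v} {F G H : Ω → ℝ}

theorem of_eq_one (hF : ∀ ω, F ω = 1) : IsPositiveRational v F :=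
  ⟨1, 1, one_ne_zero, one_ne_zero, fun ω => by simp [hF]⟩

variable (v) in
theorem apply (s : σ) : IsPositiveRational v fun ω => v ω s :=
  ⟨MvPolynomial.X s, 1, MvPolynomial.X_ne_zero s, one_ne_zero, fun ω => by simp⟩

theorem add (hF : IsPositiveRational v F) (hG : IsPositiveRational v G) :
    IsPositiveRational v fun ω => F ω + G ω := by
  obtain ⟨p₁, q₁, hp₁, hq₁, h₁⟩ := hF
  obtain ⟨p₂, q₂, -, hq₂, h₂⟩ := hG
  refine ⟨p₁ * q₂ + p₂ * q₁, q₁ * q₂, mvPolynomial_add_ne_zero (mul_ne_zero hp₁ hq₂),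
    mul_ne_zero hq₁ hq₂, fun ω => ?_⟩
  simp only [map_add, map_mul, ← h₁, ← h₂]
  ring

theorem mul (hF : IsPositiveRational v F) (hG : IsPositiveRational v G) :
    IsPositiveRational v fun ω => F ω * G ω := by
  obtain ⟨p₁, q₁, hp₁, hq₁, h₁⟩ := hF
  obtain ⟨p₂, q₂, hp₂, hq₂, h₂⟩ := hG
  refine ⟨p₁ * p₂, q₁ * q₂, mul_ne_zero hp₁ hp₂, mul_ne_zero hq₁ hq₂, fun ω => ?_⟩
  simp only [map_mul, ← h₁, ← h₂]
  ring

theorem const_mul {c : ℝ} (hc : 0 < c) (hF : IsPositiveRational v F) :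
    IsPositiveRational v fun ω => c * F ω := by
  lift c to ℝ≥0 using hc.le
  obtain ⟨p, q, hp, hq, h⟩ := hF
  refine ⟨MvPolynomial.C c * p, q, mul_ne_zero ?_ hp, hq, fun ω => ?_⟩
  · simpa using hc.ne'
  · simp [← h, mul_assoc]

theorem of_mul_eq (hF : IsPositiveRational v F) (hG : IsPositiveRational v G)
    (hHG : ∀ ω, H ω * G ω = F ω) : IsPositiveRational v H := by
  obtain ⟨p₁, q₁, hp₁, hq₁, h₁⟩ := hF
  obtain ⟨p₂, q₂, hp₂, hq₂, h₂⟩ := hG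
  refine ⟨p₁ * q₂, p₂ * q₁, mul_ne_zero hp₁ hq₂, mul_ne_zero hp₂ hq₁, fun ω => ?_⟩
  simp only [map_mul, ← h₁, ← h₂, ← hHG]
  ring

theorem of_const_mul {c : ℝ} (hc : 0 < c) (hF : IsPositiveRational v fun ω => c * F ω) :
    IsPositiveRational v F := by
  simpa [hc.ne'] using hF.const_mul (inv_pos.2 hc)

theorem exists_coeff_nonneg (hF : IsPositiveRational v F) :
    ∃ p q : MvPolynomial σ ℝ, (∀ m, 0 ≤ p.coeff m) ∧ (∀ m, 0 ≤ q.coeff m) ∧ q ≠ 0 ∧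
      ∀ ω, F ω * MvPolynomial.eval (v ω) q = MvPolynomial.eval (v ω) p := by
  obtain ⟨p, q, -, hq, h⟩ := hF
  refine ⟨p.map (algebraMap ℝ≥0 ℝ), q.map (algebraMap ℝ≥0 ℝ), fun m => ?_, fun m => ?_, ?_,
    fun ω => ?_⟩
  · simp [MvPolynomial.coeff_map]
  · simp [MvPolynomial.coeff_map]
  · exact (map_ne_zero_iff _ (MvPolynomial.map_injective _ NNReal.coe_injective)).2 hq
  · simpa [MvPolynomial.eval_map, MvPolynomial.aeval_def] using h ω

end IsPositiveRational

end PositiveRational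

section VandermondeMinor

variable {R : Type*} [CommRing R] {k m : ℕ}

/-- The minor of a `k`-rowed matrix on the columns `g`, times the Vandermonde determinant of `g`.
The Vandermonde factor makes it invariant under permutations of `g`, so no signs have to be
tracked; for increasing `g` over `ℝ` the factor is positive. -/
def vandermondeMinor (A : Matrix (Fin k) ℕ R) (g : Fin k → ℕ) : R :=
  (A.submatrix id g).det * (vandermonde fun j => (g j : R)).det

theorem vandermondeMinor_comp_perm (A : Matrix (Fin k) ℕ R) (g : Fin k → ℕ)
    (τ : Equiv.Perm (Fin k)) : vandermondeMinor A (g ∘ τ) = vandermondeMinor A g := by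
  have hminor : (A.submatrix id (g ∘ τ)).det = Equiv.Perm.sign τ * (A.submatrix id g).det :=
    det_permute' τ (A.submatrix id g)
  have hvandermonde : (vandermonde fun j => ((g ∘ τ) j : R)).det
      = Equiv.Perm.sign τ * (vandermonde fun j => (g j : R)).det :=
    det_permute τ (vandermonde fun j => (g j : R))
  have sign_sq : ((Equiv.Perm.sign τ : ℤ) : R) * (Equiv.Perm.sign τ : ℤ) = 1 := by
    rw [← Int.cast_mul, ← Units.val_mul, Int.units_mul_self]; simp
  rw [vandermondeMinor, hminor, hvandermonde, vandermondeMinor]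
  linear_combination (A.submatrix id g).det * (vandermonde fun j => (g j : R)).det * sign_sq

theorem det_vandermonde_vecCons (x : ℕ) (g : Fin k → ℕ) :
    (vandermonde fun j => ((vecCons x g j : ℕ) : R)).det
      = (∏ j, ((g j : R) - x)) * (vandermonde fun j => (g j : R)).det := by
  rw [det_vandermonde, det_vandermonde, Fin.prod_univ_succ]
  simp [Fin.prod_Ioi_succ]

theorem det_vandermonde_pos {g : Fin k → ℕ} (hg : StrictMono g) :
    0 < (vandermonde fun j => (g j : ℝ)).det := by
  rw [det_vandermonde]
  refine Finset.prod_pos fun i _ => Finset.prod_pos fun j hj => ?_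
  rw [sub_pos]
  exact_mod_cast hg (Finset.mem_Ioi.1 hj)

theorem vandermondeMinor_three_term (A : Matrix (Fin (m + 2)) ℕ R) (r : Fin (m + 2))
    (K : Fin m → ℕ) (w x y : ℕ) :
    ((x : R) - w) * (y - x) * (vandermondeMinor A (vecCons w (vecCons y K))
        * vandermondeMinor (A.submatrix r.succAbove id) (vecCons x K))
      = (y - w) * ((y - x) * (vandermondeMinor A (vecCons w (vecCons x K))
          * vandermondeMinor (A.submatrix r.succAbove id) (vecCons y K))
        + (x - w) * (vandermondeMinor A (vecCons x (vecCons y K))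
          * vandermondeMinor (A.submatrix r.succAbove id) (vecCons w K))) := by
  simp only [vandermondeMinor, det_vandermonde_vecCons, Fin.prod_univ_succ, cons_val_zero,
    cons_val_succ, submatrix_submatrix, Function.comp_id, Function.id_comp]
  linear_combination ((y : R) - w) * (x - w) * (y - x) * (∏ j, ((K j : R) - w))
    * (∏ j, ((K j : R) - x)) * (∏ j, ((K j : R) - y)) * (vandermonde fun j => (K j : R)).det ^ 2
    * karlin_identity A r K w x y

end VandermondeMinor

section ContiguousReduction

theorem exists_perm_eq_add_of_mem_Ico {k c : ℕ} {g : Fin k → ℕ} (hg : Function.Injective g)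
    (hmem : ∀ j, g j ∈ Set.Ico c (c + k)) :
    ∃ τ : Equiv.Perm (Fin k), g = (fun i : Fin k => c + i) ∘ τ := by
  have hbound (j : Fin k) : c ≤ g j ∧ g j < c + k := hmem j
  let s (j : Fin k) : Fin k := ⟨g j - c, by have := hbound j; omega⟩
  have hs (j : Fin k) : g j = c + s j := by have := hbound j; simp only [s]; omega
  have hinj : Function.Injective s := fun i j hij => hg (by rw [hs, hs, hij])
  exact ⟨Equiv.ofBijective s (Finite.injective_iff_bijective.1 hinj), funext hs⟩

theorem exists_mem_Ico_notMem_range {k c N : ℕ} {g : Fin k → ℕ} (hg : Function.Injective g)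
    (hmem : ∀ j, g j ∈ Set.Ico c (c + N)) (hk : k ≠ N) :
    ∃ x ∈ Set.Ico c (c + N), x ∉ Set.range g := by
  by_contra! hfull
  have himage : Finset.univ.image g = Finset.Ico c (c + N) := by
    ext x
    simp only [Finset.mem_image, Finset.mem_univ, true_and, Finset.mem_Ico]
    exact ⟨by rintro ⟨j, rfl⟩; exact hmem j, hfull x⟩
  apply hk
  simpa [Finset.card_image_of_injective _ hg] using congrArg Finset.card himage

theorem exists_perm_comp_eq_vecCons {m : ℕ} {α : Type*} {g : Fin (m + 2) → α} {w y : α}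
    (hw : w ∈ Set.range g) (hy : y ∈ Set.range g) (hwy : w ≠ y) :
    ∃ (τ : Equiv.Perm (Fin (m + 2))) (K : Fin m → α), g ∘ τ = vecCons w (vecCons y K) := by
  obtain ⟨p, rfl⟩ := hw
  obtain ⟨q, rfl⟩ := hy
  obtain ⟨τ, hp, hq⟩ := MulAction.is_two_pretransitive_iff.1
    (Equiv.Perm.isMultiplyPretransitive (Fin (m + 2)) 2) (Fin.zero_ne_one (n := m))
    (ne_of_apply_ne g hwy)
  refine ⟨τ, fun j => g (τ j.succ.succ), funext fun j => ?_⟩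
  refine Fin.cases ?_ (fun j => Fin.cases ?_ (fun j => ?_) j) j
  · exact congrArg g hp
  · exact congrArg g hq
  · simp

theorem vecCons_injective_iff {k : ℕ} {α : Type*} {x : α} {g : Fin k → α} :
    Function.Injective (vecCons x g) ↔ x ∉ Set.range g ∧ Function.Injective g :=
  Fin.cons_injective_iff

variable {Ω σ : Type*} {v : Ω → σ → ℝ} {k m : ℕ}

theorem isPositiveRational_vandermondeMinor_of_three_term {X : Ω → Matrix (Fin (m + 2)) ℕ ℝ}
    {r : Fin (m + 2)} {K : Fin m → ℕ} {w x y : ℕ} (hwx : w < x) (hxy : x < y)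
    (hwxK : IsPositiveRational v fun ω => vandermondeMinor (X ω) (vecCons w (vecCons x K)))
    (hxyK : IsPositiveRational v fun ω => vandermondeMinor (X ω) (vecCons x (vecCons y K)))
    (hwK : IsPositiveRational v fun ω =>
      vandermondeMinor ((X ω).submatrix r.succAbove id) (vecCons w K))
    (hxK : IsPositiveRational v fun ω =>
      vandermondeMinor ((X ω).submatrix r.succAbove id) (vecCons x K))
    (hyK : IsPositiveRational v fun ω =>
      vandermondeMinor ((X ω).submatrix r.succAbove id) (vecCons y K)) :
    IsPositiveRational v fun ω => vandermondeMinor (X ω) (vecCons w (vecCons y K)) := by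
  have hwx' : (0 : ℝ) < x - w := sub_pos.2 (by exact_mod_cast hwx)
  have hxy' : (0 : ℝ) < y - x := sub_pos.2 (by exact_mod_cast hxy)
  have hwy' : (0 : ℝ) < y - w := by linarith
  refine .of_const_mul (mul_pos hwx' hxy') (.of_mul_eq (.const_mul hwy' (.add
    (.const_mul hxy' (hwxK.mul hyK)) (.const_mul hwx' (hxyK.mul hwK)))) hxK fun ω => ?_)
  rw [← vandermondeMinor_three_term]
  ring

theorem isPositiveRational_vandermondeMinor_of_mem_Ico_card {c : ℕ}
    {X : Ω → Matrix (Fin k) ℕ ℝ} {g : Fin k → ℕ}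
    (hX : IsPositiveRational v fun ω => ((X ω).submatrix id fun i : Fin k => c + i).det)
    (hg : Function.Injective g) (hmem : ∀ j, g j ∈ Set.Ico c (c + k)) :
    IsPositiveRational v fun ω => vandermondeMinor (X ω) g := by
  obtain ⟨τ, rfl⟩ := exists_perm_eq_add_of_mem_Ico hg hmem
  have hmono : StrictMono fun i : Fin k => c + (i : ℕ) :=
    fun _ _ hij => Nat.add_lt_add_left hij c
  simp only [vandermondeMinor_comp_perm]
  simpa only [vandermondeMinor, mul_comm] using hX.const_mul (det_vandermonde_pos hmono)

theorem isPositiveRational_vandermondeMinor_of_gap {w x y : ℕ}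
    {X : Ω → Matrix (Fin (m + 2)) ℕ ℝ} {g : Fin (m + 2) → ℕ} (hg : Function.Injective g)
    (hmem : ∀ j, g j ∈ Set.Icc w y) (hw : w ∈ Set.range g) (hy : y ∈ Set.range g)
    (hx : x ∈ Set.Ioo w y) (hxg : x ∉ Set.range g)
    (hX : ∀ (j : ℕ) (hj : j ≤ m + 2) (L : Fin j → ℕ), Function.Injective L →
      (∀ i, L i ∈ Set.Icc w y) → w ∉ Set.range L ∨ y ∉ Set.range L →
      IsPositiveRational v fun ω => vandermondeMinor ((X ω).submatrix (Fin.castLE hj) id) L) :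
    IsPositiveRational v fun ω => vandermondeMinor (X ω) g := by
  obtain ⟨hwx, hxy⟩ := hx
  have hwy : w < y := hwx.trans hxy
  obtain ⟨τ, K, hK⟩ := exists_perm_comp_eq_vecCons hw hy hwy.ne
  have hKg (j : Fin m) : K j = g (τ j.succ.succ) := (congrFun hK j.succ.succ).symm
  have hKmem (j : Fin m) : K j ∈ Set.Icc w y := hKg j ▸ hmem _
  have hxK : x ∉ Set.range K := by rintro ⟨j, rfl⟩; exact hxg ⟨_, (hKg j).symm⟩
  obtain ⟨hwyK, hyK, hKinj⟩ : w ∉ Set.range (vecCons y K) ∧ y ∉ Set.range K ∧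
      Function.Injective K := by
    simpa only [hK, vecCons_injective_iff] using hg.comp τ.injective
  have hwK : w ∉ Set.range K := by grind [range_cons]
  have wide {u z : ℕ} (huz : u ≠ z) (hu : u ∈ Set.Icc w y) (hz : z ∈ Set.Icc w y)
      (huK : u ∉ Set.range K) (hzK : z ∉ Set.range K) (hends : u = x ∨ z = x) :
      IsPositiveRational v fun ω => vandermondeMinor (X ω) (vecCons u (vecCons z K)) := by
    refine hX (m + 2) le_rfl _ ?_ ?_ ?_
    · grind [vecCons_injective_iff, range_cons]
    · exact Fin.cases hu (Fin.cases hz hKmem)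
    · grind [range_cons]
  have narrow {u : ℕ} (hu : u ∈ Set.Icc w y) (huK : u ∉ Set.range K) :
      IsPositiveRational v fun ω =>
        vandermondeMinor ((X ω).submatrix (Fin.last (m + 1)).succAbove id) (vecCons u K) := by
    rw [Fin.succAbove_last]
    refine hX (m + 1) (Nat.le_succ _) _ ?_ ?_ ?_
    · grind [vecCons_injective_iff]
    · exact Fin.cases hu hKmem
    · grind [range_cons]
  simp only [← vandermondeMinor_comp_perm _ g τ, hK]
  have hxmem : x ∈ Set.Icc w y := ⟨hwx.le, hxy.le⟩
  have hwmem : w ∈ Set.Icc w y := ⟨le_rfl, hwy.le⟩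
  have hymem : y ∈ Set.Icc w y := ⟨hwy.le, le_rfl⟩
  exact isPositiveRational_vandermondeMinor_of_three_term hwx hxy
    (wide hwx.ne hwmem hxmem hwK hxK (.inr rfl)) (wide hxy.ne hxmem hymem hxK hyK (.inl rfl))
    (narrow hwmem hwK) (narrow hxmem hxK) (narrow hymem hyK)

theorem isPositiveRational_vandermondeMinor {c N : ℕ} {X : Ω → Matrix (Fin k) ℕ ℝ} {g : Fin k → ℕ}
    (hX : ∀ (j : ℕ) (hj : j ≤ k) (d : ℕ), c ≤ d → d + j ≤ c + N → IsPositiveRational v fun ω =>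
      ((X ω).submatrix (Fin.castLE hj) fun i : Fin j => d + i).det)
    (hg : Function.Injective g) (hmem : ∀ j, g j ∈ Set.Ico c (c + N)) :
    IsPositiveRational v fun ω => vandermondeMinor (X ω) g := by
  induction N generalizing c k with
  | zero =>
    obtain rfl : k = 0 := by
      by_contra hk
      have := hmem ⟨0, Nat.pos_of_ne_zero hk⟩
      simp at this
    exact .of_eq_one fun ω => by simp [vandermondeMinor]
  | succ N ih =>
    rcases eq_or_ne k (N + 1) with rfl | hk
    · exact isPositiveRational_vandermondeMinor_of_mem_Ico_card (hX _ le_rfl c le_rfl le_rfl) hg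
        hmem
    have smaller (j : ℕ) (hj : j ≤ k) (L : Fin j → ℕ) (hL : Function.Injective L)
        (hLmem : ∀ i, L i ∈ Set.Icc c (c + N)) (hends : c ∉ Set.range L ∨ c + N ∉ Set.range L) :
        IsPositiveRational v fun ω => vandermondeMinor ((X ω).submatrix (Fin.castLE hj) id) L := by
      rcases hends with hc | hcN
      · refine ih (c := c + 1) (fun i hi d _ _ => hX i (hi.trans hj) d (by omega) (by omega)) hL
          fun i => ?_
        have hi : L i ≠ c := fun h => hc ⟨i, h⟩
        grind
      · refine ih (fun i hi d _ _ => hX i (hi.trans hj) d (by omega) (by omega)) hL fun i => ?_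
        have hi : L i ≠ c + N := fun h => hcN ⟨i, h⟩
        grind
    have hmem' : ∀ j, g j ∈ Set.Icc c (c + N) := by grind
    by_cases hends : c ∈ Set.range g ∧ c + N ∈ Set.range g
    · obtain ⟨x, hx, hxg⟩ := exists_mem_Ico_notMem_range hg hmem hk
      have hxIoo : x ∈ Set.Ioo c (c + N) := by grind
      obtain _ | _ | m := k
      · simp at hends
      · obtain ⟨⟨p, hp⟩, ⟨q, hq⟩⟩ := hends
        have hpq : p = q := Subsingleton.elim (α := Fin 1) p q
        grind
      exact isPositiveRational_vandermondeMinor_of_gap hg hmem' hends.1 hends.2 hxIoo hxg smaller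
    · exact smaller k le_rfl g hg hmem' (not_and_or.1 hends)

theorem isPositiveRational_det_submatrix_id {s : ℕ} {X : Ω → Matrix (Fin k) ℕ ℝ} {g : Fin k → ℕ}
    (hX : ∀ (j : ℕ) (hj : j ≤ k) (d : ℕ), d + j ≤ s → IsPositiveRational v fun ω =>
      ((X ω).submatrix (Fin.castLE hj) fun i : Fin j => d + i).det)
    (hg : StrictMono g) (hgs : ∀ j, g j < s) :
    IsPositiveRational v fun ω => ((X ω).submatrix id g).det := by
  have h := isPositiveRational_vandermondeMinor (c := 0) (N := s) (X := X)
    (fun j hj d _ hd => hX j hj d (by omega)) hg.injective fun j => by simpa using hgs j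
  simp only [vandermondeMinor, mul_comm _ (vandermonde _).det] at h
  exact h.of_const_mul (det_vandermonde_pos hg)

theorem isPositiveRational_det_submatrix {r s : ℕ} {X : Ω → Matrix ℕ ℕ ℝ} {f g : Fin k → ℕ}
    (hX : ∀ j c d : ℕ, c + j ≤ r → d + j ≤ s → IsPositiveRational v fun ω =>
      ((X ω).submatrix (fun i : Fin j => c + i) fun i : Fin j => d + i).det)
    (hf : StrictMono f) (hfr : ∀ i, f i < r) (hg : StrictMono g) (hgs : ∀ j, g j < s) :
    IsPositiveRational v fun ω => ((X ω).submatrix f g).det := by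
  have contiguousRows (j c : ℕ) (hc : c + j ≤ r) (L : Fin j → ℕ) (hL : StrictMono L)
      (hLs : ∀ i, L i < s) : IsPositiveRational v fun ω =>
        ((X ω).submatrix (fun i : Fin j => c + i) L).det :=
    isPositiveRational_det_submatrix_id (X := fun ω => (X ω).submatrix (fun i : Fin j => c + i) id)
      (fun i _ d hd => hX i c d (by omega) hd) hL hLs
  have h := isPositiveRational_det_submatrix_id (v := v) (X := fun ω => ((X ω).submatrix id g)ᵀ)
    (fun j hj c hc => by
      simpa only [← transpose_submatrix, det_transpose, submatrix_submatrix, Function.id_comp] using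
        contiguousRows j c hc _ (hg.comp (Fin.strictMono_castLE hj)) fun i => hgs _) hf hfr
  simpa only [← transpose_submatrix, det_transpose, submatrix_submatrix, Function.id_comp,
    Function.comp_id] using h

end ContiguousReduction

section ContiguousMinor

variable (n : ℕ) (M : Matrix (ZMod n) (ZMod n) ℝ)

theorem contiguousMinor_zero (a b : ℤ) : contiguousMinor n M a b 0 = 1 :=
  det_fin_zero

theorem contiguousMinor_add_mul_add_mul (a b t : ℤ) (y : ℕ) :
    contiguousMinor n M (a + n * t) (b + n * t) y = contiguousMinor n M a b y := by
  simp [contiguousMinor]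

theorem contiguousMinor_octahedron (a b : ℤ) (y : ℕ) :
    contiguousMinor n M (a + 1) b (y + 1) * contiguousMinor n M a (b + 1) (y + 1)
      = contiguousMinor n M a b (y + 2) * contiguousMinor n M (a + 1) (b + 1) y
        + contiguousMinor n M (a + 1) (b + 1) (y + 1) * contiguousMinor n M a b (y + 1) := by
  have h := dodgson_condensation (of fun i j : Fin (y + 2) =>
    M ((a + (i : ℤ) : ℤ) : ZMod n) ((b + ((y + 2 : ℕ) : ℤ) - 1 - (j : ℤ) : ℤ) : ZMod n))
  convert (eq_sub_iff_add_eq.1 h).symm using 3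
  all_goals
    refine congrArg det (ext fun i j => ?_)
    change M _ _ = M _ _
    congr 2 <;> grind

theorem centralMinor_add_two_mul (x t : ℤ) (y : ℕ) :
    centralMinor n M (x + 2 * n * t) y = centralMinor n M x y := by
  simp only [centralMinor, Int.fdiv_eq_ediv_of_nonneg _ zero_le_two]
  rw [← contiguousMinor_add_mul_add_mul n M (((x - y) / 2)) _ t, mul_assoc]
  congr 1 <;> omega

theorem centralMinor_two_mul_add (a : ℤ) (y : ℕ) :
    centralMinor n M (2 * a + y) y = contiguousMinor n M a (a + ((n : ℤ) - 1) / 2) y := by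
  simp only [centralMinor, Int.fdiv_eq_ediv_of_nonneg _ zero_le_two]
  congr 1 <;> omega

theorem centralMinor_two_mul_add_one_add (a : ℤ) (y : ℕ) :
    centralMinor n M (2 * a + 1 + y) y
      = contiguousMinor n M a (a + (((n : ℤ) - 1) / 2 + 1)) y := by
  simp only [centralMinor, Int.fdiv_eq_ediv_of_nonneg _ zero_le_two]
  congr 1 <;> omega

/-- The family of small central minors of `M`: the point at which a polynomial in the variables
indexed by `SmallIdx n` is evaluated. -/
noncomputable def smallCentralMinors (s : SmallIdx n) : ℝ :=
  centralMinor n M s.1.1 s.1.2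

theorem isPositiveRational_centralMinor {x : ℤ} {y : ℕ}
    (h : 2 * y < n ∨ (2 * y = n ∧ Odd (x + y))) :
    IsPositiveRational (smallCentralMinors n) fun M => centralMinor n M x y := by
  rcases y.eq_zero_or_pos with rfl | hy
  · exact .of_eq_one fun M => contiguousMinor_zero n M _ _
  have hn : (0 : ℤ) < 2 * n := by omega
  obtain ⟨x₀, t, rfl, hx₀, hx₀n⟩ : ∃ x₀ t : ℤ, x = x₀ + 2 * n * t ∧ 1 ≤ x₀ ∧ x₀ ≤ 2 * n :=
    ⟨(x - 1) % (2 * n) + 1, (x - 1) / (2 * n), by linarith [Int.emod_add_mul_ediv (x - 1) (2 * n)],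
      by linarith [Int.emod_nonneg (x - 1) hn.ne'], by linarith [Int.emod_lt_of_pos (x - 1) hn]⟩
  have hmem : (x₀, y) ∈ SmallIdx n := by
    refine ⟨hx₀, hx₀n, h.imp (⟨hy, ·⟩) (And.imp_right fun hodd => ?_)⟩
    simpa [add_right_comm, mul_assoc, Int.odd_add] using hodd
  simp only [centralMinor_add_two_mul]
  exact .apply (smallCentralMinors n) ⟨_, hmem⟩

/-- The contiguous minors `CM_{a,a+d,y}` whose row and column arcs are disjoint are positive
rational functions of the small central minors. The offset `d` is fixed because the octahedron
recurrence connects three consecutive offsets. -/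
def PositiveAtOffset (d : ℤ) : Prop :=
  ∀ (a : ℤ) (y : ℕ), y ≤ d → y + d ≤ n →
    IsPositiveRational (smallCentralMinors n) fun M => contiguousMinor n M a (a + d) y

variable {n} {d : ℤ}

theorem positiveAtOffset_half : PositiveAtOffset n (((n : ℤ) - 1) / 2) := by
  intro a y hy _
  simp only [← centralMinor_two_mul_add]
  exact isPositiveRational_centralMinor n (.inl (by omega))

theorem positiveAtOffset_half_add_one : PositiveAtOffset n (((n : ℤ) - 1) / 2 + 1) := by
  intro a y _ hyn
  simp only [← centralMinor_two_mul_add_one_add]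
  refine isPositiveRational_centralMinor n ?_
  rcases lt_or_ge (2 * y) n with h | h
  · exact .inl h
  · exact .inr ⟨by omega, a + y, by ring⟩

theorem PositiveAtOffset.mul_contiguousMinor (hd : PositiveAtOffset n d) (a : ℤ) {y : ℕ}
    (hy : y + 2 ≤ d) (hyn : y + 2 + d ≤ n) :
    IsPositiveRational (smallCentralMinors n) fun M =>
      contiguousMinor n M (a + 1) (a + d) (y + 1) * contiguousMinor n M a (a + d + 1) (y + 1) := by
  simp only [contiguousMinor_octahedron]
  rw [add_right_comm]
  exact .add (.mul (hd a (y + 2) (by omega) (by omega)) (hd (a + 1) y (by omega) (by omega)))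
    (.mul (hd (a + 1) (y + 1) (by omega) (by omega)) (hd a (y + 1) (by omega) (by omega)))

theorem PositiveAtOffset.add_one (hd : PositiveAtOffset n d) (hpred : PositiveAtOffset n (d - 1))
    (hnd : n ≤ 2 * d) : PositiveAtOffset n (d + 1) := by
  rintro a (_ | y) hy hyn
  · exact .of_eq_one fun M => contiguousMinor_zero n M _ _
  refine .of_mul_eq (hd.mul_contiguousMinor a (y := y) (by omega) (by omega))
    (hpred (a + 1) (y + 1) (by omega) (by omega)) fun M => ?_
  ring_nf

theorem PositiveAtOffset.sub_one (hd : PositiveAtOffset n d) (hsucc : PositiveAtOffset n (d + 1))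
    (hnd : 2 * d ≤ n) : PositiveAtOffset n (d - 1) := by
  rintro a (_ | y) hy hyn
  · exact .of_eq_one fun M => contiguousMinor_zero n M _ _
  refine .of_mul_eq (hd.mul_contiguousMinor (a - 1) (y := y) (by omega) (by omega))
    (hsucc (a - 1) (y + 1) (by omega) (by omega)) fun M => ?_
  ring_nf

theorem positiveAtOffset (d : ℤ) : PositiveAtOffset n d := by
  suffices PositiveAtOffset n d ∧ PositiveAtOffset n (d + 1) from this.1
  induction d using Int.inductionOn' (b := ((n : ℤ) - 1) / 2) with
  | zero => exact ⟨positiveAtOffset_half, positiveAtOffset_half_add_one⟩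
  | succ d hd ih => exact ⟨ih.2, ih.2.add_one (by simpa using ih.1) (by omega)⟩
  | pred d hd ih => exact ⟨ih.1.sub_one ih.2 (by omega), by simpa using ih.1⟩

theorem isPositiveRational_contiguousMinor {a b : ℤ} {y : ℕ} (hy : y ≤ b - a)
    (hyn : y + (b - a) ≤ n) :
    IsPositiveRational (smallCentralMinors n) fun M => contiguousMinor n M a b y := by
  simpa only [add_sub_cancel] using positiveAtOffset (b - a) a y hy hyn

end ContiguousMinor

section Cut

variable {n : ℕ} {t : ℤ} {k : ℕ}

/-- The matrix `M` with the circle cut open just before position `-t` and its columns listed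
backwards from there. The first `r` rows and the first `n - r` columns correspond to two
complementary arcs. -/
def cutMatrix (n : ℕ) (t : ℤ) (M : Matrix (ZMod n) (ZMod n) ℝ) : Matrix ℕ ℕ ℝ :=
  of fun i j => M ((i - t : ℤ) : ZMod n) ((n - 1 - j - t : ℤ) : ZMod n)

theorem cutMatrix_apply_mod [NeZero n] (M : Matrix (ZMod n) (ZMod n) ℝ) (t p q : ℕ) :
    cutMatrix n t M ((p + t) % n) (n - 1 - (q + t) % n) = M p q := by
  have hlt : (q + t) % n < n := Nat.mod_lt _ (NeZero.pos n)
  have hcol : (n - 1 - (n - 1 - (q + t) % n : ℕ) - t : ℤ) = ((q + t) % n : ℕ) - t := by omega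
  rw [cutMatrix, of_apply, hcol]
  simp

theorem det_submatrix_cutMatrix (M : Matrix (ZMod n) (ZMod n) ℝ) (c d : ℕ) :
    ((cutMatrix n t M).submatrix (fun i : Fin k => c + i) fun i : Fin k => d + i).det
      = contiguousMinor n M (c - t) (n - d - k - t) k := by
  refine congrArg det (ext fun i j => ?_)
  simp only [cutMatrix, of_apply, submatrix_apply]
  congr 2 <;> grind

theorem isPositiveRational_det_submatrix_cutMatrix {r s : ℕ} {f g : Fin k → ℕ} (hrs : r + s ≤ n)
    (hf : StrictMono f) (hfr : ∀ i, f i < r) (hg : StrictMono g) (hgs : ∀ j, g j < s) :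
    IsPositiveRational (smallCentralMinors n) fun M => ((cutMatrix n t M).submatrix f g).det := by
  refine isPositiveRational_det_submatrix (fun j c d hc hd => ?_) hf hfr hg hgs
  simp only [det_submatrix_cutMatrix]
  exact isPositiveRational_contiguousMinor (by omega) (by omega)

theorem exists_le_forall_lt_forall_le {ι κ : Type*} [Finite ι] {f : ι → ℕ} {g : κ → ℕ}
    (hf : ∀ i, f i < n) (hfg : ∀ i j, f i < g j) :
    ∃ r ≤ n, (∀ i, f i < r) ∧ ∀ j, r ≤ g j := by
  cases nonempty_fintype ι
  exact ⟨Finset.univ.sup fun i => f i + 1, Finset.sup_le fun i _ => hf i,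
    fun i => Finset.le_sup (f := fun i => f i + 1) (Finset.mem_univ i),
    fun j => Finset.sup_le fun i _ => hfg i j⟩

end Cut

/-- Any noninterlaced minor is a positive rational function of the small central minors.
The noninterlaced pair `A = {a₁,…,a_k}`, `B = {b₁,…,b_k}` is encoded by the hypothesis
that after a cyclic rotation by `t`, the sequence `a₁, …, a_k, b_k, …, b₁` is strictly
increasing (i.e. it occurs in circular order). Then there are polynomials `p, q` in the
small central minors, both with nonnegative coefficients and `q ≠ 0`, with
`det((M_{aᵢ,bⱼ})) · q((CM_s(M))_s) = p((CM_s(M))_s)` for every `n × n` real matrix `M`. -/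
theorem noninterlaced_minor_positive_rational (n k : ℕ) [NeZero n]
    (a b : Fin k → Fin n) (t : ℕ)
    (hg : StrictMono (fun i : Fin k => ((a i : ℕ) + t) % n))
    (hh : StrictAnti (fun i : Fin k => ((b i : ℕ) + t) % n))
    (hgh : ∀ i j : Fin k, ((a i : ℕ) + t) % n < ((b j : ℕ) + t) % n) :
    ∃ p q : MvPolynomial (SmallIdx n) ℝ,
      (∀ m : (SmallIdx n) →₀ ℕ, 0 ≤ MvPolynomial.coeff m p) ∧
      (∀ m : (SmallIdx n) →₀ ℕ, 0 ≤ MvPolynomial.coeff m q) ∧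
      q ≠ 0 ∧
      ∀ M : Matrix (ZMod n) (ZMod n) ℝ,
        Matrix.det (Matrix.of fun i j : Fin k =>
            M (((a i : ℕ) : ZMod n)) (((b j : ℕ) : ZMod n))) *
          MvPolynomial.eval (fun s : SmallIdx n => centralMinor n M s.1.1 s.1.2) q =
          MvPolynomial.eval (fun s : SmallIdx n => centralMinor n M s.1.1 s.1.2) p := by
  have mod_lt (m : ℕ) : m % n < n := Nat.mod_lt m (NeZero.pos n)
  obtain ⟨r, hrn, har, hrb⟩ := exists_le_forall_lt_forall_le (fun i => mod_lt (a i + t)) hgh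
  have cols_mono : StrictMono fun j => n - 1 - ((b j : ℕ) + t) % n := fun i j hij =>
    Nat.sub_lt_sub_left ((hh hij).trans_le (Nat.le_sub_one_of_lt (mod_lt _))) (hh hij)
  have cols_lt (j : Fin k) : n - 1 - ((b j : ℕ) + t) % n < n - r := by
    have := hrb j
    have := mod_lt (b j + t)
    omega
  have minor_eq (M : Matrix (ZMod n) (ZMod n) ℝ) :
      ((cutMatrix n t M).submatrix (fun i => ((a i : ℕ) + t) % n)
        fun j => n - 1 - ((b j : ℕ) + t) % n).det
        = (of fun i j => M ((a i : ℕ) : ZMod n) ((b j : ℕ) : ZMod n)).det :=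
    congrArg det (ext fun i j => cutMatrix_apply_mod M t (a i) (b j))
  simp only [← minor_eq]
  exact (isPositiveRational_det_submatrix_cutMatrix (Nat.add_sub_cancel' hrn).le
    hg har cols_mono cols_lt).exists_coeff_nonneg
end

section
/- Let M be a symmetric n×n real matrix, and suppose that every small central minor of M is positive, i.e. CM_{x,y}(M) > 0 for all x ∈ {1,…,n} and all y with either 1 ≤ y < n/2, or y = n/2 and x+y odd (these are n(n−1)/2 conditions). Then every noninterlaced minor of M is positive: for every noninterlaced pair of k-element subsets A = {a_1,…,a_k} and B = {b_1,…,b_k} of {1,…,n}, listed so that a_1, …, a_k, b_k, …, b_1 occur in circular order, one has det((M_{a_i,b_j})_{1≤i,j≤k}) > 0. -/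
/-!
Dodgson condensation relates contiguous minors whose row and column arcs start `d`, `d + 1` and
`d + 2` apart. For `d + 1 ≤ n / 2` it makes every offset-`d` minor a quotient of subtraction-free
expressions in minors of larger offset. The central minors are those of offset `e` and `e + 1`,
`e = ⌊(n - 1) / 2⌋`, so all contiguous minors with disjoint arcs are positive, the offsets beyond
`n / 2` being covered by symmetry. Cutting the circle between the two arcs of a noninterlaced pair
turns its minor into a minor of a matrix all of whose solid minors are positive. By Fekete's
criterion, the repeated use of a three-term Plücker relation to fill the gaps between the rows and
between the columns, such a minor is positive.
-/

section DeterminantIdentities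

open Matrix

variable {R : Type*} [CommRing R]

theorem sum_neg_one_pow_mul_det_submatrix_succAbove_smul {m : ℕ}
    (A : Matrix (Fin (m + 1)) (Fin m) R) :
    ∑ i : Fin (m + 1), ((-1) ^ (i : ℕ) * (A.submatrix i.succAbove id).det) • A i = 0 := by
  ext j
  have hdet : (of fun i => (Fin.cons (A i j) (A i) : Fin (m + 1) → R)).det = 0 :=
    det_zero_of_column_eq (Fin.succ_ne_zero j).symm fun i => by simp
  rw [det_succ_column_zero] at hdet
  rw [Finset.sum_apply, Pi.zero_apply, ← hdet]
  refine Finset.sum_congr rfl fun i _ => ?_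
  have hminor : (of fun i => (Fin.cons (A i j) (A i) : Fin (m + 1) → R)).submatrix
      i.succAbove Fin.succ = A.submatrix i.succAbove id := by
    ext; simp
  rw [hminor, Pi.smul_apply, smul_eq_mul, of_apply, Fin.cons_zero, mul_right_comm]

theorem det_eq_neg_one_pow_mul_det_of_move_row {m : ℕ}
    {A B : Matrix (Fin (m + 1)) (Fin (m + 1)) R} {p q : Fin (m + 1)}
    (hmoved : A p = B q) (hrest : ∀ i, A (p.succAbove i) = B (q.succAbove i)) :
    A.det = (-1) ^ (p + q : ℕ) * B.det := by
  rw [det_succ_row A p, det_succ_row B q, Finset.mul_sum]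
  refine Finset.sum_congr rfl fun j _ => ?_
  have hminor : A.submatrix p.succAbove j.succAbove = B.submatrix q.succAbove j.succAbove := by
    ext i l
    exact congrFun (hrest i) _
  rw [hmoved, hminor]
  have hsign : (-1 : R) ^ (q : ℕ) * (-1) ^ (q : ℕ) = 1 := pow_mul_pow_eq_one _ (by simp)
  have hsigns : (-1 : R) ^ (p + j : ℕ) = (-1) ^ (p + q : ℕ) * (-1) ^ (q + j : ℕ) := by
    simp only [pow_add]
    linear_combination -((-1) ^ (p : ℕ) * (-1) ^ (j : ℕ)) * hsign
  rw [hsigns, mul_assoc, mul_assoc, mul_assoc]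

theorem det_eq_neg_one_pow_mul_det_of_row_eq_single {m : ℕ}
    {A : Matrix (Fin (m + 1)) (Fin (m + 1)) R} {i j : Fin (m + 1)} (h : A i = Pi.single j 1) :
    A.det = (-1) ^ (i + j : ℕ) * (A.submatrix i.succAbove j.succAbove).det := by
  rw [← adjugate_fin_succ_eq_det_submatrix, adjugate_apply, ← h, updateRow_eq_self]

theorem three_term_pluecker_relation {k : ℕ}
    (A : Matrix (Fin (k + 3)) (Fin (k + 2)) R) (p : Fin (k + 1)) :
    (A.submatrix p.castSucc.succ.succAbove id).det *
        (A.submatrix (fun i : Fin (k + 1) => i.castSucc.succ) Fin.castSucc).det =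
      (A.submatrix Fin.castSucc id).det *
          (A.submatrix (fun i => (p.castSucc.succAbove i).succ) Fin.castSucc).det +
        (A.submatrix Fin.succ id).det *
          (A.submatrix (fun i => (p.succ.succAbove i).castSucc) Fin.castSucc).det := by
  set W := A.submatrix (fun i : Fin (k + 1) => i.castSucc.succ) Fin.castSucc
  -- `φ` substitutes its argument for row `p` of `W`; applied to the linear relation between the
  -- rows of `A`, it kills all rows but the first, the last and the middle row `p`.
  let φ : (Fin (k + 2) → R) →ₗ[R] R :=
    (detRowAlternating.toMultilinearMap.toLinearMap W p).comp (LinearMap.funLeft R R Fin.castSucc)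
  have hφ (i : Fin (k + 3)) : φ (A i) = (W.updateRow p fun j => A i j.castSucc).det := rfl
  have hmiddle : φ (A p.castSucc.succ) = W.det := by
    rw [hφ]
    exact congrArg det (updateRow_eq_self W p)
  have hrepeated (i : Fin k) : φ (A (p.succAbove i).castSucc.succ) = 0 :=
    det_updateRow_eq_zero (M := W) (Fin.succAbove_ne p i)
  have hfirst : φ (A 0) = (-1) ^ (p : ℕ) *
      (A.submatrix (fun i => (p.succ.succAbove i).castSucc) Fin.castSucc).det := by
    rw [hφ, det_eq_neg_one_pow_mul_det_of_move_row (p := p) (q := 0), Fin.val_zero, add_zero]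
    · ext j; simp
    · intro i; ext j; simp [W]
  have hlast : φ (A (Fin.last (k + 2))) = (-1) ^ (p + k : ℕ) *
      (A.submatrix (fun i => (p.castSucc.succAbove i).succ) Fin.castSucc).det := by
    rw [hφ, det_eq_neg_one_pow_mul_det_of_move_row (p := p) (q := Fin.last k), Fin.val_last]
    · ext j; simp
    · intro i; ext j; simp [W]
  have hrelation :=
    congrArg φ (sum_neg_one_pow_mul_det_submatrix_succAbove_smul A)
  simp only [map_sum, map_smul, map_zero, smul_eq_mul] at hrelation
  rw [Fin.sum_univ_succ, Fin.sum_univ_castSucc, Fin.sum_univ_succAbove _ p] at hrelation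
  simp only [hrepeated, Fin.succ_last, hmiddle, hfirst, hlast, Fin.succAbove_zero,
    Fin.succAbove_last, Fin.val_zero, Fin.val_succ, Fin.val_castSucc, Fin.val_last, mul_zero,
    Finset.sum_const_zero] at hrelation
  have hsign : (-1 : R) ^ k * (-1) ^ k = 1 := pow_mul_pow_eq_one k (by simp)
  refine (isUnit_neg_one.pow (p : ℕ)).mul_left_cancel ?_
  simp only [pow_succ, pow_add, Nat.succ_eq_add_one] at hrelation ⊢
  linear_combination (-1) ^ (p : ℕ) * (A.submatrix Fin.castSucc id).det *
    (A.submatrix (fun i => (p.castSucc.succAbove i).succ) Fin.castSucc).det * hsign - hrelation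

theorem desnanot_jacobi_s6 {k : ℕ} (A : Matrix (Fin (k + 2)) (Fin (k + 2)) R) :
    A.det * (A.submatrix (fun i : Fin k => i.castSucc.succ) fun j => j.castSucc.succ).det =
      (A.submatrix Fin.castSucc Fin.castSucc).det * (A.submatrix Fin.succ Fin.succ).det -
        (A.submatrix Fin.castSucc Fin.succ).det * (A.submatrix Fin.succ Fin.castSucc).det := by
  -- Insert the unit row `e₀` at position `1` and apply the three-term relation to that row.
  obtain ⟨B, hunit, rfl⟩ : ∃ B : Matrix (Fin (k + 3)) (Fin (k + 2)) R,
      B (Fin.succ 0) = Pi.single 0 1 ∧ B.submatrix (Fin.succ 0).succAbove id = A :=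
    ⟨of fun i => (Fin.succ 0).insertNth (α := fun _ => Fin (k + 2) → R) (Pi.single 0 1) A.row i,
      by ext; simp, by ext; simp⟩
  have hcastSucc (i : Fin (k + 1)) :
      (0 : Fin (k + 2)).succ.succAbove i.castSucc = ((0 : Fin (k + 1)).succ.succAbove i).castSucc :=
    Fin.castSucc_succAbove_castSucc (i := (0 : Fin (k + 1)).succ)
  have hsucc (i : Fin (k + 1)) : (0 : Fin (k + 2)).succ.succAbove i.succ = i.succ.succ :=
    Fin.succ_succAbove_succ 0 i
  have hinner := det_eq_neg_one_pow_mul_det_of_row_eq_single (i := 0) (j := 0)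
    (A := B.submatrix (fun i : Fin (k + 1) => i.castSucc.succ) Fin.castSucc) (by
      ext j
      exact (congrFun hunit _).trans (by simp [Pi.single_apply]))
  have hinit := det_eq_neg_one_pow_mul_det_of_row_eq_single (i := (0 : Fin (k + 1)).succ) (j := 0)
    (A := B.submatrix Fin.castSucc id) hunit
  have htail := det_eq_neg_one_pow_mul_det_of_row_eq_single (i := 0) (j := 0)
    (A := B.submatrix Fin.succ id) hunit
  have hrelation := three_term_pluecker_relation B 0
  rw [hinner, hinit, htail] at hrelation
  simp only [submatrix_submatrix, Function.comp_def, id, hsucc, hcastSucc, Fin.castSucc_zero,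
    Fin.succAbove_zero, ← Fin.succ_castSucc, Fin.val_zero, Fin.val_succ] at hrelation ⊢
  linear_combination hrelation

end DeterminantIdentities

section FeketeCriterion

open Matrix

variable {R : Type*} [CommRing R] [LinearOrder R] [IsStrictOrderedRing R]

theorem apply_eq_add_or_exists_gap_of_strictMono {k : ℕ} {f : Fin (k + 1) → ℕ}
    (hf : StrictMono f) :
    (∀ i, f i = f 0 + i) ∨ ∃ i : Fin k, f i.castSucc + 1 < f i.succ := by
  refine or_iff_not_imp_right.mpr fun hgap i => ?_
  push Not at hgap
  induction i using Fin.induction with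
  | zero => simp
  | succ i ih =>
    have hlt : f i.castSucc < f i.succ := hf i.castSucc_lt_succ
    have hle := hgap i
    rw [Fin.val_castSucc] at ih
    rw [Fin.val_succ]
    omega

theorem det_submatrix_pos_of_insert_row {k : ℕ} {X : Matrix ℕ (Fin (k + 2)) R}
    {g : Fin (k + 3) → ℕ} {p : Fin (k + 1)}
    (hfirst : 0 < (X.submatrix (g ∘ Fin.castSucc) id).det)
    (hlast : 0 < (X.submatrix (g ∘ Fin.succ) id).det)
    (hinit : ∀ f : Fin (k + 1) → Fin (k + 3), StrictMono f →
      0 < (X.submatrix (g ∘ f) Fin.castSucc).det) :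
    0 < (X.submatrix (g ∘ p.castSucc.succ.succAbove) id).det := by
  have hrelation := three_term_pluecker_relation (X.submatrix g id) p
  refine pos_of_mul_pos_left (hrelation.symm ▸ ?_)
    (hinit _ (Fin.strictMono_succ.comp Fin.strictMono_castSucc)).le
  exact add_pos
    (mul_pos hfirst (hinit _ (Fin.strictMono_succ.comp (Fin.strictMono_succAbove _))))
    (mul_pos hlast (hinit _ (Fin.strictMono_castSucc.comp (Fin.strictMono_succAbove _))))

theorem det_submatrix_pos_of_consecutive_rows {K p : ℕ} {X : Matrix ℕ (Fin K) R}
    (hX : ∀ m (hm : m ≤ K) r, r + m ≤ p →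
      0 < (X.submatrix (fun i : Fin m => r + i) (Fin.castLE hm)).det)
    {f : Fin K → ℕ} (hf : StrictMono f) (hfp : ∀ i, f i < p) :
    0 < (X.submatrix f id).det := by
  induction K with
  | zero => simp
  | succ K ihK =>
    induction hspan : f (Fin.last K) - f 0 using Nat.strong_induction_on generalizing f with
    | _ s ihspan =>
    obtain hconsecutive | ⟨i, hgap⟩ := apply_eq_add_or_exists_gap_of_strictMono hf
    · have hlast := hfp (Fin.last K)
      rw [hconsecutive, Fin.val_last] at hlast
      rw [funext hconsecutive]
      exact hX (K + 1) le_rfl (f 0) hlast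
    · obtain _ | k := K
      · exact i.elim0
      -- Fill the gap with `f i + 1`; dropping either end of the resulting `g` shortens the span.
      let g : Fin (k + 3) → ℕ := i.castSucc.succ.insertNth (f i.castSucc + 1) f
      have hg : StrictMono g := Fin.strictMono_insertNth hf i _ (Nat.lt_succ_self _) hgap
      have hgf : g ∘ i.castSucc.succ.succAbove = f := by
        ext j; simp [g]
      have hg_zero : g 0 = f 0 := by
        rw [← hgf]; simp
      have hg_last : g (Fin.last _) = f (Fin.last _) := by
        rw [← hgf]; simp
      have hgp (j) : g j < p := (hg.monotone j.le_last).trans_lt (hg_last ▸ hfp _)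
      have hinit (e : Fin (k + 1) → Fin (k + 3)) (he : StrictMono e) :
          0 < (X.submatrix (g ∘ e) Fin.castSucc).det :=
        ihK (X := X.submatrix id Fin.castSucc) (fun m hm r => hX m (hm.trans (Nat.le_succ _)) r)
          (hg.comp he) fun j => hgp _
      rw [← hgf]
      refine det_submatrix_pos_of_insert_row
        (ihspan _ ?_ (hg.comp Fin.strictMono_castSucc) (fun j => hgp _) rfl)
        (ihspan _ ?_ (hg.comp Fin.strictMono_succ) (fun j => hgp _) rfl) hinit
      · rw [← hspan, ← hg_zero, ← hg_last]
        exact Nat.sub_lt_sub_right (hg.monotone (Fin.zero_le _)) (hg (Fin.castSucc_lt_last _))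
      · rw [← hspan, ← hg_zero, ← hg_last]
        exact Nat.sub_lt_sub_left (hg Fin.last_pos) (hg (Fin.succ_pos _))

theorem det_submatrix_pos_of_solid_minors_pos {p q k : ℕ} {X : Matrix ℕ ℕ R}
    (hX : ∀ m r c, r + m ≤ p → c + m ≤ q →
      0 < (X.submatrix (fun i : Fin m => r + i) fun j : Fin m => c + j).det)
    {f g : Fin k → ℕ} (hf : StrictMono f) (hg : StrictMono g) (hfp : ∀ i, f i < p)
    (hgq : ∀ j, g j < q) : 0 < (X.submatrix f g).det := by
  rw [← det_transpose]
  refine det_submatrix_pos_of_consecutive_rows (X := (X.submatrix f id)ᵀ) (p := q)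
    (fun m hm c hc => ?_) hg hgq
  rw [← det_transpose]
  refine det_submatrix_pos_of_consecutive_rows (X := X.submatrix id fun j : Fin m => c + j)
    (p := p) (fun l hl r hr => ?_) (hf.comp (Fin.strictMono_castLE hm)) fun i => hfp _
  exact hX l r c hr (by omega)

end FeketeCriterion

section CyclicMinors

open Matrix

variable {R : Type*} [CommRing R] {n : ℕ} {M : Matrix (ZMod n) (ZMod n) R}

/-- The contiguous minor `CM_{a,b,y}(M)` over a commutative ring; `contiguousMinor` is the case of
real entries. -/
noncomputable def cyclicMinor (M : Matrix (ZMod n) (ZMod n) R) (a b : ℤ) (y : ℕ) : R :=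
  (of fun i j : Fin y => M ((a + i : ℤ) : ZMod n) ((b + y - 1 - j : ℤ) : ZMod n)).det

/-- The central minor `CM_{x,y}(M)` over a commutative ring; `centralMinor` is the case of real
entries. -/
noncomputable def cyclicCentralMinor (M : Matrix (ZMod n) (ZMod n) R) (x : ℤ) (y : ℕ) : R :=
  cyclicMinor M (Int.fdiv (x - y) 2) (Int.fdiv (x - y + n - ((n : ℤ) - 1) % 2) 2) y

theorem cyclicMinor_zero (M : Matrix (ZMod n) (ZMod n) R) (a b : ℤ) : cyclicMinor M a b 0 = 1 :=
  det_fin_zero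

theorem cyclicMinor_congr {a b a' b' : ℤ} (ha : (a : ZMod n) = a') (hb : (b : ZMod n) = b')
    (y : ℕ) : cyclicMinor M a b y = cyclicMinor M a' b' y := by
  simp only [cyclicMinor, Int.cast_add, Int.cast_sub, ha, hb]

theorem cyclicMinor_comm (hM : M.IsSymm) (a b : ℤ) (y : ℕ) :
    cyclicMinor M a b y = cyclicMinor M b a y := by
  rw [cyclicMinor, ← det_transpose, ← det_submatrix_equiv_self Fin.revPerm]
  congr 1
  ext i j
  simp only [submatrix_apply, transpose_apply, of_apply, Fin.revPerm_apply, Fin.val_rev]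
  rw [hM.apply]
  congr 2 <;> omega

theorem cyclicMinor_dodgson_condensation (M : Matrix (ZMod n) (ZMod n) R) (a b : ℤ) (k : ℕ) :
    cyclicMinor M a (b + 1) (k + 1) * cyclicMinor M (a + 1) b (k + 1) =
      cyclicMinor M a b (k + 2) * cyclicMinor M (a + 1) (b + 1) k +
        cyclicMinor M a b (k + 1) * cyclicMinor M (a + 1) (b + 1) (k + 1) := by
  let A : Matrix (Fin (k + 2)) (Fin (k + 2)) R :=
    of fun i j => M ((a + i : ℤ) : ZMod n) ((b + (k + 2 : ℕ) - 1 - j : ℤ) : ZMod n)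
  have hminor {m : ℕ} {r c : Fin m → Fin (k + 2)} (a' b' : ℤ) (hr : ∀ i, a + r i = a' + i)
      (hc : ∀ j, b + (k + 2 : ℕ) - 1 - c j = b' + m - 1 - j) :
      (A.submatrix r c).det = cyclicMinor M a' b' m := by
    simp only [A, cyclicMinor, submatrix, of_apply, hr, hc]
  have hdodgson := desnanot_jacobi_s6 A
  rw [hminor (a + 1) (b + 1), hminor a (b + 1), hminor (a + 1) b, hminor a b,
    hminor (a + 1) (b + 1)] at hdodgson
  · have hA : A.det = cyclicMinor M a b (k + 2) := rfl
    linear_combination -hdodgson + hA * cyclicMinor M (a + 1) (b + 1) k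
  all_goals
    intro i
    simp only [Fin.val_castSucc, Fin.val_succ] <;> omega

theorem cyclicCentralMinor_eq {e : ℕ} (he : n = 2 * e + 1 ∨ n = 2 * e + 2) (x : ℤ) (y : ℕ) :
    cyclicCentralMinor M x y = cyclicMinor M ((x - y) / 2) ((x - y + 1) / 2 + e) y := by
  rw [cyclicCentralMinor, Int.fdiv_eq_ediv_of_nonneg _ zero_le_two,
    Int.fdiv_eq_ediv_of_nonneg _ zero_le_two]
  congr 1
  omega

theorem cyclicCentralMinor_add_natCast (hM : M.IsSymm) {x : ℤ} {y : ℕ}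
    (hxy : Even n → Odd (x + y)) :
    cyclicCentralMinor M (x + n) y = cyclicCentralMinor M x y := by
  obtain rfl | hn := eq_or_ne n 0
  · simp
  obtain ⟨e, he⟩ : ∃ e, n = 2 * e + 1 ∨ n = 2 * e + 2 := ⟨(n - 1) / 2, by omega⟩
  rw [cyclicCentralMinor_eq he, cyclicCentralMinor_eq he, cyclicMinor_comm hM]
  have hparity : n = 2 * e + 1 ∨ (x - y) % 2 = 1 := by grind
  refine cyclicMinor_congr ?_ ?_ y
  · rw [← sub_eq_zero, ← Int.cast_sub,
      show (x + n - y + 1) / 2 + (e : ℤ) - (x - y) / 2 = n by omega]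
    simp
  · congr 1
    omega

end CyclicMinors

section OffsetMinors

variable {R : Type*} [CommRing R] [LinearOrder R] {n d : ℕ} {M : Matrix (ZMod n) (ZMod n) R}

/-- Positivity of all contiguous minors `CM_{a,a+d,y}(M)` whose row arc `a, …, a + y - 1` and
column arc `a + d, …, a + d + y - 1` are disjoint. -/
def OffsetMinorsPos (M : Matrix (ZMod n) (ZMod n) R) (d : ℕ) : Prop :=
  ∀ (a : ℤ) (y : ℕ), y ≤ d → y + d ≤ n → 0 < cyclicMinor M a (a + d) y

theorem OffsetMinorsPos.sub (h : OffsetMinorsPos M d) (hM : M.IsSymm) (hd : d ≤ n) :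
    OffsetMinorsPos M (n - d) := by
  intro a y hy hyn
  rw [cyclicMinor_comm hM,
    cyclicMinor_congr (b' := a + (n - d : ℕ) + d) rfl (by push_cast [hd]; simp)]
  exact h _ y (by omega) (by omega)

variable [IsStrictOrderedRing R]

theorem OffsetMinorsPos.cyclicMinor_mul_cyclicMinor_pos (h : OffsetMinorsPos M (d + 1)) {k : ℕ}
    (hk : k + 1 ≤ d) (hkn : k + d + 3 ≤ n) (a : ℤ) :
    0 < cyclicMinor M (a - 1) (a + d + 1) (k + 1) * cyclicMinor M a (a + d) (k + 1) := by
  have hinner (y : ℕ) (hy : y ≤ k + 2) : 0 < cyclicMinor M a (a + d + 1) y := by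
    have hpos := h a y (by omega) (by omega)
    rwa [Nat.cast_succ, ← add_assoc] at hpos
  have houter (y : ℕ) (hy : y ≤ k + 2) : 0 < cyclicMinor M (a - 1) (a + d) y := by
    have hpos := h (a - 1) y (by omega) (by omega)
    rwa [Nat.cast_succ, sub_add_add_cancel] at hpos
  have hdodgson := cyclicMinor_dodgson_condensation M (a - 1) (a + d) k
  rw [sub_add_cancel] at hdodgson
  rw [hdodgson]
  exact add_pos (mul_pos (houter _ le_rfl) (hinner _ (by omega)))
    (mul_pos (houter _ (by omega)) (hinner _ (by omega)))

theorem OffsetMinorsPos.of_succ_of_add_two (h₁ : OffsetMinorsPos M (d + 1))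
    (h₂ : OffsetMinorsPos M (d + 2)) (hd : 2 * (d + 1) ≤ n) : OffsetMinorsPos M d := by
  rintro a (_ | k) hk -
  · simp [cyclicMinor_zero]
  · have houter := h₂ (a - 1) (k + 1) (by omega) (by omega)
    rw [show a - 1 + (d + 2 : ℕ) = a + d + 1 by push_cast; ring] at houter
    exact pos_of_mul_pos_right (h₁.cyclicMinor_mul_cyclicMinor_pos hk (by omega) a) houter.le

theorem OffsetMinorsPos.of_le {e : ℕ} (h₀ : OffsetMinorsPos M e) (h₁ : OffsetMinorsPos M (e + 1))
    (he : 2 * e ≤ n) (hde : d ≤ e) : OffsetMinorsPos M d := by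
  suffices hconsecutive : OffsetMinorsPos M d ∧ OffsetMinorsPos M (d + 1) from hconsecutive.1
  induction hde using Nat.decreasingInduction with
  | self => exact ⟨h₀, h₁⟩
  | of_succ d hd ih => exact ⟨ih.1.of_succ_of_add_two ih.2 (by omega), ih.1⟩

end OffsetMinors

section SmallCentralMinors

variable {R : Type*} [CommRing R] [LinearOrder R] {n e : ℕ} {M : Matrix (ZMod n) (ZMod n) R}

/-- Positivity of the `n(n-1)/2` small central minors `CM_{x,y}(M)`, `1 ≤ x ≤ n`. -/
def SmallCentralMinorsPos (M : Matrix (ZMod n) (ZMod n) R) : Prop :=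
  ∀ (x : ℤ) (y : ℕ), 1 ≤ x → x ≤ n → ((1 ≤ y ∧ 2 * y < n) ∨ (2 * y = n ∧ Odd (x + y))) →
    0 < cyclicCentralMinor M x y

theorem SmallCentralMinorsPos.cyclicCentralMinor_pos (h : SmallCentralMinorsPos M) (hM : M.IsSymm)
    {x : ℤ} {y : ℕ} (hy : 1 ≤ y) (hyn : 2 * y ≤ n) (hxy : Even n → Odd (x + y)) :
    0 < cyclicCentralMinor M x y := by
  have hperiodic : Function.Periodic
      (fun x : ℤ => (Even n → Odd (x + y)) → 0 < cyclicCentralMinor M x y) (n : ℤ) := by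
    have hparity (x : ℤ) : (Even n → Odd (x + n + y)) ↔ (Even n → Odd (x + y)) := by grind
    exact fun x => propext <| imp_congr_ctx (hparity x) fun hxy => by
      rw [cyclicCentralMinor_add_natCast hM hxy]
  obtain ⟨x', ⟨hx'₁, hx'n⟩, hxx'⟩ := hperiodic.exists_mem_Ioc (by omega) x 0
  refine hxx'.mpr (fun hx'y => h x' y hx'₁ (by omega) ?_) hxy
  grind

variable [IsStrictOrderedRing R]

theorem SmallCentralMinorsPos.offsetMinorsPos_succ (h : SmallCentralMinorsPos M) (hM : M.IsSymm)
    (he : n = 2 * e + 1 ∨ n = 2 * e + 2) : OffsetMinorsPos M (e + 1) := by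
  rintro a (_ | k) hk hkn
  · simp [cyclicMinor_zero]
  · have hcentral := h.cyclicCentralMinor_pos hM (x := 2 * a + 1 + (k + 1 : ℕ)) (y := k + 1)
      (by omega) (by omega) fun _ => ⟨a + k + 1, by push_cast; ring⟩
    rw [cyclicCentralMinor_eq he] at hcentral
    convert hcentral using 2 <;> omega

theorem SmallCentralMinorsPos.offsetMinorsPos (h : SmallCentralMinorsPos M) (hM : M.IsSymm)
    (he : n = 2 * e + 1 ∨ n = 2 * e + 2) : OffsetMinorsPos M e := by
  have hsucc := h.offsetMinorsPos_succ hM he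
  obtain hodd | heven := he
  · have hsub := hsucc.sub hM (by omega)
    rwa [show n - (e + 1) = e by omega] at hsub
  rintro a (_ | k) hk -
  · simp [cyclicMinor_zero]
  -- For even `n` rotating an offset-`e` minor by `n / 2` gives its partner in the positive product,
  -- so the two have the same sign, and one of them is a central minor with `1 ≤ x ≤ n`.
  have hperiodic : Function.Periodic (fun a : ℤ => 0 < cyclicMinor M a (a + e) (k + 1))
      (e + 1 : ℤ) := by
    intro a
    have hshift : cyclicMinor M (a + (e + 1)) (a + (e + 1) + e) (k + 1) =
        cyclicMinor M (a - 1) (a + e + 1) (k + 1) := by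
      rw [cyclicMinor_comm hM]
      refine cyclicMinor_congr ?_ (by rw [add_assoc, add_comm (e : ℤ)]) _
      rw [show a + (e + 1) + e = a - 1 + n by omega]
      simp
    have hmul := hsucc.cyclicMinor_mul_cyclicMinor_pos hk (by omega) a
    simpa only [hshift] using propext (pos_iff_pos_of_mul_pos hmul)
  obtain ⟨a', ⟨ha', ha'e⟩, haa'⟩ := hperiodic.exists_mem_Ioc (by omega) a (-((k + 2) / 2))
  have hcentral := h (2 * a' + (k + 1 : ℕ)) (k + 1) (by omega) (by omega) (by omega)
  rw [cyclicCentralMinor_eq (.inr heven)] at hcentral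
  refine haa'.mpr ?_
  convert hcentral using 2 <;> omega

theorem SmallCentralMinorsPos.offsetMinorsPos_of_le (h : SmallCentralMinorsPos M) (hM : M.IsSymm)
    {d : ℕ} (hd : d ≤ n) : OffsetMinorsPos M d := by
  obtain rfl | hn := eq_or_ne n 0
  · intro a y hy _
    obtain rfl : y = 0 := by omega
    simp [cyclicMinor_zero]
  obtain ⟨e, he⟩ : ∃ e, n = 2 * e + 1 ∨ n = 2 * e + 2 := ⟨(n - 1) / 2, by omega⟩
  have hlow {d : ℕ} (hde : d ≤ e + 1) : OffsetMinorsPos M d := by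
    obtain hde | rfl := Nat.le_succ_iff.mp hde
    · exact (h.offsetMinorsPos hM he).of_le (h.offsetMinorsPos_succ hM he) (by omega) hde
    · exact h.offsetMinorsPos_succ hM he
  obtain hde | hde := le_or_gt d (e + 1)
  · exact hlow hde
  · rw [← Nat.sub_sub_self hd]
    exact (hlow (by omega)).sub hM (Nat.sub_le n d)

end SmallCentralMinors

section NoninterlacedMinors

open Matrix

variable {R : Type*} [CommRing R] [LinearOrder R] [IsStrictOrderedRing R] {n k : ℕ}
  {M : Matrix (ZMod n) (ZMod n) R}

theorem det_pos_of_offsetMinorsPos (hM : ∀ d ≤ n, OffsetMinorsPos M d) {r c : Fin k → ℕ}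
    (hr : StrictMono r) (hc : StrictAnti c) (hrc : ∀ i j, r i < c j) (hcn : ∀ j, c j < n) (t : ℤ) :
    0 < (of fun i j => M ((r i - t : ℤ) : ZMod n) ((c j - t : ℤ) : ZMod n)).det := by
  let p := Finset.univ.sup fun i => r i + 1
  have hrp (i) : r i < p := Finset.le_sup (f := fun i => r i + 1) (Finset.mem_univ i)
  have hpc (j) : p ≤ c j := Finset.sup_le fun i _ => hrc i j
  have hpn : p ≤ n := Finset.sup_le fun i _ => (hrc i i).trans (hcn i)
  let X : Matrix ℕ ℕ R :=
    of fun i j => M ((i - t : ℤ) : ZMod n) ((n - 1 - j - t : ℤ) : ZMod n)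
  have hsolid (m i j : ℕ) (hi : i + m ≤ p) (hj : j + m ≤ n - p) :
      0 < (X.submatrix (fun l : Fin m => i + l) fun l : Fin m => j + l).det := by
    convert hM (n - j - m - i) (by omega) (i - t) m (by omega) (by omega) using 1
    refine congrArg det <| ext fun l l' => ?_
    simp only [X, submatrix_apply, of_apply]
    congr 2 <;> omega
  have hdet := det_submatrix_pos_of_solid_minors_pos hsolid hr (g := fun j => n - 1 - c j)
    (fun i j hij => by grind [hc hij]) hrp (fun j => by grind)
  convert hdet using 2
  ext i j
  have := hcn j
  simp only [X, submatrix_apply, of_apply]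
  congr 2
  omega

end NoninterlacedMinors

theorem noninterlaced_minors_pos_of_small_central_minors_pos_general {R : Type*} [CommRing R]
    [LinearOrder R] [IsStrictOrderedRing R] {n k : ℕ} {M : Matrix (ZMod n) (ZMod n) R}
    (hM : M.IsSymm) (hpos : SmallCentralMinorsPos M) (a b : Fin k → Fin n) (t : ℕ)
    (hg : StrictMono fun i => ((a i : ℕ) + t) % n) (hh : StrictAnti fun i => ((b i : ℕ) + t) % n)
    (hgh : ∀ i j, ((a i : ℕ) + t) % n < ((b j : ℕ) + t) % n) :
    0 < (Matrix.of fun i j => M (a i : ℕ) (b j : ℕ)).det := by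
  have hoffset (d : ℕ) (hd : d ≤ n) : OffsetMinorsPos M d := hpos.offsetMinorsPos_of_le hM hd
  have hrotated :=
    det_pos_of_offsetMinorsPos hoffset hg hh hgh (fun j => Nat.mod_lt _ (b j).pos) t
  simpa only [Int.cast_sub, Int.cast_natCast, ZMod.natCast_mod, Nat.cast_add, add_sub_cancel_right]
    using hrotated

/-- If every small central minor of a symmetric `n × n` real matrix `M` is positive
(`CM_{x,y}(M) > 0` for all `1 ≤ x ≤ n` and `1 ≤ y < n/2`, or `y = n/2` with `x + y` odd),
then every noninterlaced minor of `M` is positive.  The noninterlaced pair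
`A = {a₁,…,a_k}`, `B = {b₁,…,b_k}` is encoded by the hypothesis that after a cyclic
rotation by `t`, the sequence `a₁, …, a_k, b_k, …, b₁` is strictly increasing
(i.e. it occurs in circular order). -/
theorem noninterlaced_minors_pos_of_small_central_minors_pos (n k : ℕ) [NeZero n]
    (M : Matrix (ZMod n) (ZMod n) ℝ) (hM : M.IsSymm)
    (hpos : ∀ (x : ℤ) (y : ℕ), 1 ≤ x → x ≤ (n : ℤ) →
      ((1 ≤ y ∧ 2 * y < n) ∨ (2 * y = n ∧ Odd (x + (y : ℤ)))) →
      0 < centralMinor n M x y)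
    (a b : Fin k → Fin n) (t : ℕ)
    (hg : StrictMono (fun i : Fin k => ((a i : ℕ) + t) % n))
    (hh : StrictAnti (fun i : Fin k => ((b i : ℕ) + t) % n))
    (hgh : ∀ i j : Fin k, ((a i : ℕ) + t) % n < ((b j : ℕ) + t) % n) :
    0 < Matrix.det (Matrix.of fun i j : Fin k =>
        M (((a i : ℕ) : ZMod n)) (((b j : ℕ) : ZMod n))) :=
  noninterlaced_minors_pos_of_small_central_minors_pos_general hM hpos a b t hg hh hgh
end
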